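/- arXiv:1811.06714 — 3 statements merged into one kernel-verified Lean document; each statement's English description precedes it below -/
import Mathlib

section
/- Fix r > 0 and ε > 0. There exists a constant C_{r,ε} > 0 (depending also on d, W and the constants C_{ℓ,N} of the potential) such that for every solution ψ of the Schrödinger equation — i.e. every continuous map ψ : ℝ → h^r such that for each j ∈ ℤ^d the function t ↦ ψ_j(t) is differentiable and satisfies i ψ_j'(t) = μ_j ψ_j(t) + Σ_{k∈ℤ^d} V̂(t, j−k) ψ_k(t) for all t ∈ ℝ — one has ‖ψ(t)‖_r ≤ C_{r,ε} (1+|t|)^ε ‖ψ(0)‖_r for all t ∈ ℝ. -/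
/-- Squared Euclidean norm of an integer vector. -/
noncomputable def znormSq {d : ℕ} (j : Fin d → ℤ) : ℝ :=
  ∑ i, ((j i : ℝ)) ^ 2

/-- Eigenvalues of the Laplacian on the flat torus: μ_j = ‖W j‖². -/
noncomputable def mu {d : ℕ} (W : Matrix (Fin d) (Fin d) ℝ) (j : Fin d → ℤ) : ℝ :=
  ∑ i, (W.mulVec (fun a => ((j a : ℝ))) i) ^ 2

/-- Sobolev norm ‖ψ‖_r = ( Σ_j (1+|j|²)^r |ψ_j|² )^{1/2} on the Fourier side. -/
noncomputable def sobNorm {d : ℕ} (r : ℝ) (ψ : (Fin d → ℤ) → ℂ) : ℝ :=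
  Real.sqrt (∑' j : Fin d → ℤ, (1 + znormSq j) ^ r * ‖ψ j‖ ^ 2)

/-!
For a large parameter `Γ`, a normal form conjugates `D + V`, where `D` is the diagonal matrix of
the `μ_j`, to `D + Z + O(Γ^(-K))`, where `Z` couples only sites with `|μ_j - μ_k| ≤ Γ`: the other
entries of `V` are removed by dividing them by `μ_j - μ_k`, which gains a factor `Γ⁻¹` at each step.

Join `j` and `k` when `‖j - k‖ ≤ Γ` and `|μ_j - μ_k| ≤ Γ`. By an argument of Bourgain the
components of this graph, the clusters, have diameter at most `C Γ^b`. Write `μ_j = B(j, j)`. Along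
a chain the condition `|μ_j - μ_k| ≤ Γ` makes the linear functionals `B(j, ·)` small on differences
of nearby sites, hence, by Cramer's rule for integer vectors, on the space which these differences
span; one concludes by induction on the dimension of that space.

A weight which is constant on clusters therefore agrees with the Sobolev weight `⟨j⟩^r` up to a
factor `Γ^(b r)`, and it commutes with `Z` up to entries at distance at least `Γ` from the diagonal,
which are `O(Γ^(-K))`. So the weighted norm is bounded for `|t| ≲ Γ^K`. The theorem follows
by choosing `Γ ~ (1 + |t|)^(1/K)` with `K > b r / ε`.
-/

namespace SobolevGrowth

open Module

/-! ### Matrices with rapid off-diagonal decay -/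

/-- The range of the large parameter `Γ`. -/
abbrev Param : Type := {x : ℝ // 1 ≤ x}

lemma Param.one_le (Γ : Param) : (1 : ℝ) ≤ Γ := Γ.2

lemma Param.pos (Γ : Param) : (0 : ℝ) < Γ := zero_lt_one.trans_le Γ.2

/-- Infinite matrices depending on `Γ` and on time. -/
abbrev MatFamily (ι : Type*) := Param → ℝ → ι → ι → ℂ

/-- Entrywise multiplication of a matrix by a time-independent multiplier. -/
def schurMul {ι : Type*} (m : Param → ι → ι → ℂ) (A : MatFamily ι) : MatFamily ι :=
  fun Γ t j k => m Γ j k * A Γ t j k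

/-- The product of two families of infinite matrices. -/
noncomputable def matMul {ι : Type*} (A B : MatFamily ι) : MatFamily ι :=
  fun Γ t j k => ∑' m, A Γ t j m * B Γ t m k

section Decay

variable {ι : Type*} [SeminormedAddCommGroup ι] {a b c l : ℕ} {A B : MatFamily ι}
  {m : Param → ι → ι → ℂ}

lemma one_add_norm_sub_le (j m k : ι) : 1 + ‖j - k‖ ≤ (1 + ‖j - m‖) * (1 + ‖m - k‖) := by
  have := norm_sub_le_norm_sub_add_norm_sub j m k
  nlinarith [norm_nonneg (j - m), norm_nonneg (m - k)]

/-- A multiplier of size `O(Γ^(-c))` with polynomial off-diagonal growth. -/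
def IsMultiplier (c : ℕ) (m : Param → ι → ι → ℂ) : Prop :=
  ∃ C : ℝ, 0 ≤ C ∧ ∃ q : ℕ, ∀ Γ j k,
    ‖m Γ j k‖ ≤ C * ((Γ : ℝ) ^ c)⁻¹ * (1 + ‖j - k‖) ^ q

lemma isMultiplier_const (z : ℂ) : IsMultiplier 0 fun _ (_ _ : ι) => z :=
  ⟨‖z‖, norm_nonneg z, 0, fun _ _ _ => by simp⟩

/-- The entries of `A` are `O(Γ^(-a))` and decay rapidly off the diagonal. -/
def RapidDecay (a : ℕ) (A : MatFamily ι) : Prop :=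
  ∀ N : ℕ, ∃ C : ℝ, 0 ≤ C ∧ ∀ Γ t j k,
    ‖A Γ t j k‖ ≤ C * ((Γ : ℝ) ^ a)⁻¹ * ((1 + ‖j - k‖) ^ N)⁻¹

namespace RapidDecay

lemma zero (a : ℕ) : RapidDecay a (0 : MatFamily ι) :=
  fun _ => ⟨0, le_rfl, fun _ _ _ _ => by simp⟩

lemma mono (hab : b ≤ a) (hA : RapidDecay a A) : RapidDecay b A := by
  intro N
  obtain ⟨C, hC, h⟩ := hA N
  refine ⟨C, hC, fun Γ t j k => (h Γ t j k).trans ?_⟩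
  have hΓ := Γ.pos
  gcongr
  exact Γ.one_le

lemma add (hA : RapidDecay a A) (hB : RapidDecay a B) : RapidDecay a (A + B) := by
  intro N
  obtain ⟨C, hC, h⟩ := hA N
  obtain ⟨C', hC', h'⟩ := hB N
  refine ⟨C + C', by positivity, fun Γ t j k => ?_⟩
  calc ‖(A + B) Γ t j k‖ ≤ ‖A Γ t j k‖ + ‖B Γ t j k‖ := norm_add_le _ _
    _ ≤ _ := add_le_add (h Γ t j k) (h' Γ t j k)
    _ = _ := by ring

lemma schurMul (hm : IsMultiplier c m) (hA : RapidDecay a A) :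
    RapidDecay (a + c) (schurMul m A) := by
  intro N
  obtain ⟨C', hC', q, h'⟩ := hm
  obtain ⟨C, hC, h⟩ := hA (N + q)
  refine ⟨C' * C, by positivity, fun Γ t j k => ?_⟩
  have hΓ := Γ.pos
  calc ‖m Γ j k * A Γ t j k‖ = ‖m Γ j k‖ * ‖A Γ t j k‖ := norm_mul _ _
    _ ≤ (C' * ((Γ : ℝ) ^ c)⁻¹ * (1 + ‖j - k‖) ^ q)
        * (C * ((Γ : ℝ) ^ a)⁻¹ * ((1 + ‖j - k‖) ^ (N + q))⁻¹) := by
        gcongr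
        · exact h' Γ j k
        · exact h Γ t j k
    _ = _ := by
        rw [pow_add, pow_add]
        field_simp

end RapidDecay

/-- `A` is `O(Γ^(-a))`, with rapid off-diagonal decay, together with `l` time derivatives. -/
def SymbolClass (a : ℕ) : ℕ → MatFamily ι → Prop
  | 0, A => RapidDecay a A
  | l + 1, A => RapidDecay a A ∧ ∃ A' : MatFamily ι,
      (∀ Γ j k t, HasDerivAt (fun s => A Γ s j k) (A' Γ t j k) t) ∧ SymbolClass a l A'

namespace SymbolClass

lemma rapidDecay (h : SymbolClass a l A) : RapidDecay a A := by
  cases l with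
  | zero => exact h
  | succ l => exact h.1

lemma of_succ (h : SymbolClass a (l + 1) A) : SymbolClass a l A := by
  induction l generalizing A with
  | zero => exact h.1
  | succ l ih =>
    obtain ⟨h0, A', hA', h1⟩ := h
    exact ⟨h0, A', hA', ih h1⟩

lemma mono (hab : b ≤ a) (h : SymbolClass a l A) : SymbolClass b l A := by
  induction l generalizing A with
  | zero => exact RapidDecay.mono hab h
  | succ l ih =>
    obtain ⟨h0, A', hA', h1⟩ := h
    exact ⟨h0.mono hab, A', hA', ih h1⟩

lemma zero (a l : ℕ) : SymbolClass a l (0 : MatFamily ι) := by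
  induction l with
  | zero => exact RapidDecay.zero a
  | succ l ih => exact ⟨RapidDecay.zero a, 0, fun _ _ _ t => hasDerivAt_const t _, ih⟩

lemma add (hA : SymbolClass a l A) (hB : SymbolClass a l B) : SymbolClass a l (A + B) := by
  induction l generalizing A B with
  | zero => exact RapidDecay.add hA hB
  | succ l ih =>
    obtain ⟨h0, A', hA', h1⟩ := hA
    obtain ⟨h0', B', hB', h1'⟩ := hB
    exact ⟨h0.add h0', A' + B', fun Γ j k t => (hA' Γ j k t).add (hB' Γ j k t), ih h1 h1'⟩

lemma schurMul (hm : IsMultiplier c m) (hA : SymbolClass a l A) :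
    SymbolClass (a + c) l (schurMul m A) := by
  induction l generalizing A with
  | zero => exact RapidDecay.schurMul hm hA
  | succ l ih =>
    obtain ⟨h0, A', hA', h1⟩ := hA
    exact ⟨h0.schurMul hm, SobolevGrowth.schurMul m A',
      fun Γ j k t => (hA' Γ j k t).const_mul _, ih h1⟩

lemma neg (hA : SymbolClass a l A) : SymbolClass a l (-A) := by
  have h : SobolevGrowth.schurMul (fun _ _ _ => (-1 : ℂ)) A = -A := by
    funext Γ t j k
    exact neg_one_mul _
  exact h ▸ hA.schurMul (isMultiplier_const (-1))

end SymbolClass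

end Decay

/-! ### Products of rapidly decaying matrices -/

/-- Index groups in which some power of `(1 + ‖k‖)⁻¹` is summable, such as lattices. -/
class HasPolynomialGrowth (ι : Type*) [SeminormedAddCommGroup ι] : Prop where
  exists_summable : ∃ q : ℕ, Summable fun k : ι => ((1 + ‖k‖) ^ q)⁻¹

lemma exists_injective_span_basisFun (n : Type*) [Fintype n] :
    ∃ e : (n → ℤ) → Submodule.span ℤ (Set.range (Pi.basisFun ℝ n)),
      Function.Injective e ∧ ∀ k, ‖e k‖ = ‖k‖ := by
  classical
  refine ⟨fun k => ⟨fun i => k i, ?_⟩, fun k l h => ?_, fun k => ?_⟩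
  · have h : (fun i => (k i : ℝ)) = ∑ i, k i • Pi.basisFun ℝ n i := by
      ext j
      simp [Finset.sum_apply, Pi.single_apply]
    rw [h]
    exact sum_mem fun i _ => Submodule.smul_mem _ _ (Submodule.subset_span ⟨i, rfl⟩)
  · exact funext fun i => Int.cast_injective (congrFun (congrArg Subtype.val h) i)
  · exact congrArg NNReal.toReal <| Finset.sup_congr rfl fun i _ =>
      NNReal.eq (Int.norm_cast_real (k i))

instance (n : Type*) [Fintype n] : HasPolynomialGrowth (n → ℤ) where
  exists_summable := by
    obtain ⟨e, he, hnorm⟩ := exists_injective_span_basisFun n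
    have hrank :
        finrank ℤ (Submodule.span ℤ (Set.range (Pi.basisFun ℝ n))) < Fintype.card n + 1 := by
      rw [ZLattice.rank ℝ, finrank_fintype_fun_eq_card]
      exact Nat.lt_succ_self _
    refine ⟨Fintype.card n + 1, Summable.of_norm_bounded_eventually
      ((ZLattice.summable_norm_pow_inv _ _ hrank).comp_injective he) ?_⟩
    filter_upwards [(Set.finite_singleton (0 : n → ℤ)).compl_mem_cofinite] with k hk
    have : 0 < ‖k‖ := norm_pos_iff.2 hk
    rw [Function.comp_apply, hnorm, inv_pow, Real.norm_of_nonneg (by positivity)]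
    gcongr
    exact le_add_of_nonneg_left zero_le_one

section Products

variable {ι : Type*} [SeminormedAddCommGroup ι] [HasPolynomialGrowth ι]

/-- A power `q` for which `(1 + ‖k‖)^(-q)` is summable over `ι`. -/
noncomputable def growthExponent (ι : Type*) [SeminormedAddCommGroup ι] [HasPolynomialGrowth ι] :
    ℕ :=
  (HasPolynomialGrowth.exists_summable (ι := ι)).choose

/-- The summable weight `(1 + ‖k‖)^(-q)`, with `q` the growth exponent of the index group. -/
noncomputable def latticeWeight (k : ι) : ℝ := ((1 + ‖k‖) ^ growthExponent ι)⁻¹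

lemma latticeWeight_nonneg (k : ι) : 0 ≤ latticeWeight k := by
  unfold latticeWeight; positivity

lemma latticeWeight_sub_comm (j k : ι) : latticeWeight (j - k) = latticeWeight (k - j) := by
  rw [latticeWeight, norm_sub_rev, latticeWeight]

lemma summable_latticeWeight : Summable (latticeWeight (ι := ι)) :=
  HasPolynomialGrowth.exists_summable.choose_spec

lemma summable_latticeWeight_sub (j : ι) : Summable fun m => latticeWeight (j - m) :=
  (Equiv.subLeft j).summable_iff.2 summable_latticeWeight

lemma tsum_latticeWeight_sub (j : ι) :
    ∑' m, latticeWeight (j - m) = ∑' m : ι, latticeWeight m :=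
  (Equiv.subLeft j).tsum_eq latticeWeight

variable {a b l : ℕ} {A B A' B' : MatFamily ι}

namespace RapidDecay

lemma norm_mul_le (hA : RapidDecay a A) (hB : RapidDecay b B) (N : ℕ) :
    ∃ C : ℝ, 0 ≤ C ∧ ∀ Γ t j m k, ‖A Γ t j m * B Γ t m k‖ ≤
      C * ((Γ : ℝ) ^ (a + b))⁻¹ * ((1 + ‖j - k‖) ^ N)⁻¹ * latticeWeight (j - m) := by
  obtain ⟨C, hC, h⟩ := hA (N + growthExponent ι)
  obtain ⟨C', hC', h'⟩ := hB N
  refine ⟨C * C', by positivity, fun Γ t j m k => ?_⟩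
  have hΓ := Γ.pos
  have hdecay : ((1 + ‖j - m‖) ^ N)⁻¹ * ((1 + ‖m - k‖) ^ N)⁻¹ ≤ ((1 + ‖j - k‖) ^ N)⁻¹ := by
    rw [← mul_inv, ← mul_pow]
    gcongr
    exact one_add_norm_sub_le j m k
  calc ‖A Γ t j m * B Γ t m k‖ = ‖A Γ t j m‖ * ‖B Γ t m k‖ := norm_mul _ _
    _ ≤ (C * ((Γ : ℝ) ^ a)⁻¹ * ((1 + ‖j - m‖) ^ (N + growthExponent ι))⁻¹)
        * (C' * ((Γ : ℝ) ^ b)⁻¹ * ((1 + ‖m - k‖) ^ N)⁻¹) := by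
        gcongr
        · exact h Γ t j m
        · exact h' Γ t m k
    _ = C * C' * ((Γ : ℝ) ^ (a + b))⁻¹ * (((1 + ‖j - m‖) ^ N)⁻¹ * ((1 + ‖m - k‖) ^ N)⁻¹)
        * latticeWeight (j - m) := by
        rw [latticeWeight, pow_add, pow_add, mul_inv, mul_inv]; ring
    _ ≤ _ := by
        have := latticeWeight_nonneg (j - m)
        gcongr

lemma summable_mul (hA : RapidDecay a A) (hB : RapidDecay b B) (Γ : Param) (t : ℝ) (j k : ι) :
    Summable fun m => A Γ t j m * B Γ t m k := by
  obtain ⟨C, -, h⟩ := hA.norm_mul_le hB 0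
  exact Summable.of_norm_bounded ((summable_latticeWeight_sub j).mul_left _) fun m => h Γ t j m k

lemma matMul (hA : RapidDecay a A) (hB : RapidDecay b B) : RapidDecay (a + b) (matMul A B) := by
  intro N
  obtain ⟨C, hC, h⟩ := hA.norm_mul_le hB N
  have hw : 0 ≤ ∑' m : ι, latticeWeight m := tsum_nonneg latticeWeight_nonneg
  refine ⟨C * ∑' m : ι, latticeWeight m, by positivity, fun Γ t j k => ?_⟩
  refine (tsum_of_norm_bounded ((summable_latticeWeight_sub j).mul_left _).hasSum
    fun m => h Γ t j m k).trans (le_of_eq ?_)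
  rw [tsum_mul_left, tsum_latticeWeight_sub]
  ring

lemma hasDerivAt_matMul (hA : RapidDecay a A) (hB : RapidDecay b B) (hA' : RapidDecay a A')
    (hB' : RapidDecay b B')
    (dA : ∀ Γ j k t, HasDerivAt (fun s => A Γ s j k) (A' Γ t j k) t)
    (dB : ∀ Γ j k t, HasDerivAt (fun s => B Γ s j k) (B' Γ t j k) t)
    (Γ : Param) (j k : ι) (t : ℝ) :
    HasDerivAt (fun s => SobolevGrowth.matMul A B Γ s j k)
      ((SobolevGrowth.matMul A' B + SobolevGrowth.matMul A B') Γ t j k) t := by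
  obtain ⟨C, -, h⟩ := hA'.norm_mul_le hB 0
  obtain ⟨C', -, h'⟩ := hA.norm_mul_le hB' 0
  have hw := summable_latticeWeight_sub j
  have := hasDerivAt_tsum ((hw.mul_left _).add (hw.mul_left _))
    (fun m s => (dA Γ j m s).mul (dB Γ m k s))
    (fun m s => (norm_add_le _ _).trans (add_le_add (h Γ s j m k) (h' Γ s j m k)))
    (hA.summable_mul hB Γ t j k) t
  convert! this using 1
  exact ((hA'.summable_mul hB Γ t j k).tsum_add (hA.summable_mul hB' Γ t j k)).symm

end RapidDecay

lemma SymbolClass.matMul (hA : SymbolClass a l A) (hB : SymbolClass b l B) :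
    SymbolClass (a + b) l (matMul A B) := by
  induction l generalizing A B with
  | zero => exact RapidDecay.matMul hA hB
  | succ l ih =>
    refine ⟨hA.rapidDecay.matMul hB.rapidDecay, ?_⟩
    have hA₁ := hA.of_succ
    have hB₁ := hB.of_succ
    obtain ⟨h0, A', hA', h1⟩ := hA
    obtain ⟨h0', B', hB', h1'⟩ := hB
    exact ⟨_, h0.hasDerivAt_matMul h0' h1.rapidDecay h1'.rapidDecay hA' hB',
      (ih h1 hB₁).add (ih hA₁ h1')⟩

end Products

/-! ### The ring of symbols -/

section Additive

variable {ι : Type*} [SeminormedAddCommGroup ι] {a c : ℕ} {m : Param → ι → ι → ℂ}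

/-- The additive group of families all of whose time derivatives decay rapidly and are
`O(Γ^(-a))`. -/
def symbols (ι : Type*) [SeminormedAddCommGroup ι] (a : ℕ) : AddSubgroup (MatFamily ι) where
  carrier := {A | ∀ l, SymbolClass a l A}
  zero_mem' := SymbolClass.zero a
  add_mem' hA hB l := (hA l).add (hB l)
  neg_mem' hA l := (hA l).neg

/-- The matrix families whose time derivatives decay rapidly off the diagonal, uniformly in `Γ`
and in time; they form a ring under the product of matrices. -/
def SymbolRing (ι : Type*) [SeminormedAddCommGroup ι] : Type _ := symbols ι 0

namespace SymbolRing

instance : AddCommGroup (SymbolRing ι) := inferInstanceAs (AddCommGroup (symbols ι 0))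

/-- The entries of a symbol. -/
def entry (A : SymbolRing ι) : MatFamily ι := A.1

@[ext] lemma ext {A B : SymbolRing ι} (h : ∀ Γ t j k, A.entry Γ t j k = B.entry Γ t j k) :
    A = B :=
  Subtype.ext (by funext Γ t j k; exact h Γ t j k)

lemma symbolClass (A : SymbolRing ι) (l : ℕ) : SymbolClass 0 l A.entry := A.2 l

lemma rapidDecay (A : SymbolRing ι) : RapidDecay 0 A.entry := A.2 0

@[simp] lemma entry_add (A B : SymbolRing ι) (Γ : Param) (t : ℝ) (j k : ι) :
    (A + B).entry Γ t j k = A.entry Γ t j k + B.entry Γ t j k := rfl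

@[simp] lemma entry_neg (A : SymbolRing ι) (Γ : Param) (t : ℝ) (j k : ι) :
    (-A).entry Γ t j k = -A.entry Γ t j k := rfl

@[simp] lemma entry_sub (A B : SymbolRing ι) (Γ : Param) (t : ℝ) (j k : ι) :
    (A - B).entry Γ t j k = A.entry Γ t j k - B.entry Γ t j k := rfl

@[simp] lemma entry_zero (Γ : Param) (t : ℝ) (j k : ι) :
    (0 : SymbolRing ι).entry Γ t j k = 0 := rfl

/-- The symbols of size `O(Γ^(-a))`. -/
def order (ι : Type*) [SeminormedAddCommGroup ι] (a : ℕ) : AddSubgroup (SymbolRing ι) where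
  carrier := {A | ∀ l, SymbolClass a l A.entry}
  zero_mem' := SymbolClass.zero a
  add_mem' hA hB l := (hA l).add (hB l)
  neg_mem' hA l := (hA l).neg

lemma mem_order_zero (A : SymbolRing ι) : A ∈ order ι 0 := A.symbolClass

lemma order_mono {a b : ℕ} (h : b ≤ a) : order ι a ≤ order ι b := fun _ hA l => (hA l).mono h

lemma exists_norm_entry_le_const (A : SymbolRing ι) :
    ∃ C : ℝ, 0 ≤ C ∧ ∀ Γ t j k, ‖A.entry Γ t j k‖ ≤ C := by
  simpa only [pow_zero, inv_one, mul_one] using A.rapidDecay 0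

/-- Entrywise multiplication by a multiplier, as an additive map on symbols. -/
def schur (m : Param → ι → ι → ℂ) (hm : IsMultiplier 0 m) : SymbolRing ι →+ SymbolRing ι where
  toFun A := ⟨schurMul m A.entry, fun l => (A.symbolClass l).schurMul hm⟩
  map_zero' := by ext; exact mul_zero _
  map_add' A B := by ext; exact mul_add _ _ _

lemma entry_schur (hm : IsMultiplier 0 m) (A : SymbolRing ι) (Γ : Param) (t : ℝ) (j k : ι) :
    (schur m hm A).entry Γ t j k = m Γ j k * A.entry Γ t j k := rfl

lemma schur_mem_order (hm : IsMultiplier 0 m) (hmc : IsMultiplier c m) {A : SymbolRing ι}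
    (hA : A ∈ order ι a) : schur m hm A ∈ order ι (a + c) := fun l => (hA l).schurMul hmc

lemma exists_derivative {A : SymbolRing ι} (hA : A ∈ order ι a) (l : ℕ) :
    SymbolClass a l (fun Γ t j k => Complex.I * deriv (fun s => A.entry Γ s j k) t) ∧
      ∀ Γ j k t, HasDerivAt (fun s => A.entry Γ s j k)
        (deriv (fun s => A.entry Γ s j k) t) t := by
  obtain ⟨-, A', hderiv, h⟩ := hA (l + 1)
  have he : A' = fun Γ t j k => deriv (fun s => A.entry Γ s j k) t := by
    funext Γ t j k; exact (hderiv Γ j k t).deriv.symm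
  subst he
  exact ⟨h.schurMul (isMultiplier_const Complex.I), hderiv⟩

/-- The derivation `i ∂_t`. -/
noncomputable def iDt : SymbolRing ι →+ SymbolRing ι where
  toFun A := ⟨_, fun l => (exists_derivative A.mem_order_zero l).1⟩
  map_zero' := by
    ext Γ t j k
    change Complex.I * deriv (fun _ => (0 : ℂ)) t = 0
    rw [deriv_const, mul_zero]
  map_add' A B := by
    ext Γ t j k
    have h := ((exists_derivative A.mem_order_zero 0).2 Γ j k t).add
      ((exists_derivative B.mem_order_zero 0).2 Γ j k t)
    exact (congrArg (Complex.I * ·) h.deriv).trans (mul_add _ _ _)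

lemma hasDerivAt_entry (A : SymbolRing ι) (Γ : Param) (j k : ι) (t : ℝ) :
    HasDerivAt (fun s => A.entry Γ s j k) (-Complex.I * (iDt A).entry Γ t j k) t := by
  convert! (exists_derivative A.mem_order_zero 0).2 Γ j k t using 1
  change -Complex.I * (Complex.I * _) = _
  rw [← mul_assoc, neg_mul, Complex.I_mul_I, neg_neg, one_mul]

lemma iDt_entry_eq {A : SymbolRing ι} {Γ : Param} {j k : ι} {t : ℝ} {x : ℂ}
    (h : HasDerivAt (fun s => A.entry Γ s j k) (-Complex.I * x) t) :
    (iDt A).entry Γ t j k = x :=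
  mul_left_cancel₀ (neg_ne_zero.2 Complex.I_ne_zero) ((A.hasDerivAt_entry Γ j k t).unique h)

lemma iDt_mem_order {A : SymbolRing ι} (hA : A ∈ order ι a) : iDt A ∈ order ι a :=
  fun l => (exists_derivative hA l).1

lemma iDt_schur (hm : IsMultiplier 0 m) (A : SymbolRing ι) :
    iDt (schur m hm A) = schur m hm (iDt A) := by
  ext Γ t j k
  refine iDt_entry_eq ?_
  convert! (A.hasDerivAt_entry Γ j k t).const_mul (m Γ j k) using 1
  rw [entry_schur, mul_left_comm]

end SymbolRing

end Additive

section Multiplicative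

variable {ι : Type*} [SeminormedAddCommGroup ι] {a b : ℕ}

namespace SymbolRing

open scoped Classical in
/-- The identity matrix. -/
noncomputable def idMat (ι : Type*) : MatFamily ι := fun _ _ j k => if j = k then 1 else 0

lemma rapidDecay_idMat : RapidDecay 0 (idMat ι) := by
  refine fun N => ⟨1, zero_le_one, fun Γ t j k => ?_⟩
  by_cases h : j = k
  · simp [idMat, h]
  · simp only [idMat, h, if_false, norm_zero]
    positivity

lemma symbolClass_idMat (l : ℕ) : SymbolClass 0 l (idMat ι) := by
  cases l with
  | zero => exact rapidDecay_idMat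
  | succ l =>
    exact ⟨rapidDecay_idMat, 0, fun _ _ _ t => hasDerivAt_const t _, SymbolClass.zero 0 l⟩

noncomputable instance : One (SymbolRing ι) := ⟨⟨idMat ι, symbolClass_idMat⟩⟩

open scoped Classical in
lemma entry_one (Γ : Param) (t : ℝ) (j k : ι) :
    (1 : SymbolRing ι).entry Γ t j k = if j = k then 1 else 0 := rfl

lemma iDt_one : iDt (1 : SymbolRing ι) = 0 := by
  ext Γ t j k
  refine iDt_entry_eq ?_
  rw [entry_zero, mul_zero]
  exact hasDerivAt_const t ((1 : SymbolRing ι).entry Γ t j k)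

variable [HasPolynomialGrowth ι]

noncomputable instance : Mul (SymbolRing ι) :=
  ⟨fun A B => ⟨matMul A.entry B.entry, fun l => (A.symbolClass l).matMul (B.symbolClass l)⟩⟩

lemma entry_mul (A B : SymbolRing ι) (Γ : Param) (t : ℝ) (j k : ι) :
    (A * B).entry Γ t j k = ∑' m, A.entry Γ t j m * B.entry Γ t m k := rfl

lemma summable_mul (A B : SymbolRing ι) (Γ : Param) (t : ℝ) (j k : ι) :
    Summable fun m => A.entry Γ t j m * B.entry Γ t m k :=
  A.rapidDecay.summable_mul B.rapidDecay Γ t j k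

lemma exists_norm_entry_le {A : SymbolRing ι} (hA : A ∈ order ι a) :
    ∃ C : ℝ, 0 ≤ C ∧ ∀ Γ t j k,
      ‖A.entry Γ t j k‖ ≤ C * ((Γ : ℝ) ^ a)⁻¹ * latticeWeight (j - k) :=
  (hA 0) (growthExponent ι)

lemma exists_norm_entry_le_latticeWeight (A : SymbolRing ι) :
    ∃ C : ℝ, 0 ≤ C ∧ ∀ Γ t j k, ‖A.entry Γ t j k‖ ≤ C * latticeWeight (j - k) := by
  simpa only [pow_zero, inv_one, mul_one] using exists_norm_entry_le A.mem_order_zero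

lemma summable_mul_mul (A B C : SymbolRing ι) (Γ : Param) (t : ℝ) (j k : ι) :
    Summable fun x : ι × ι =>
      A.entry Γ t j x.1 * B.entry Γ t x.1 x.2 * C.entry Γ t x.2 k := by
  obtain ⟨a, ha, hA⟩ := A.exists_norm_entry_le_latticeWeight
  obtain ⟨b, hb, hB⟩ := B.exists_norm_entry_le_const
  obtain ⟨c, hc, hC⟩ := C.exists_norm_entry_le_latticeWeight
  have hwA := (summable_latticeWeight_sub j).mul_left a
  have hwC := (summable_latticeWeight_sub k).mul_left c
  refine Summable.of_norm_bounded ((hwA.mul_of_nonneg hwC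
    (fun m => mul_nonneg ha (latticeWeight_nonneg _))
    fun m => mul_nonneg hc (latticeWeight_nonneg _)).mul_left b) fun x => ?_
  have := mul_nonneg ha (latticeWeight_nonneg (j - x.1))
  calc ‖A.entry Γ t j x.1 * B.entry Γ t x.1 x.2 * C.entry Γ t x.2 k‖
      ≤ (a * latticeWeight (j - x.1)) * b * (c * latticeWeight (x.2 - k)) := by
        rw [norm_mul, norm_mul]
        gcongr
        · exact hA ..
        · exact hB ..
        · exact hC ..
    _ = _ := by rw [latticeWeight_sub_comm x.2]; ring

noncomputable instance : Ring (SymbolRing ι) :=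
  { (inferInstance : AddCommGroup (SymbolRing ι)) with
    mul := (· * ·)
    one := 1
    mul_assoc := fun A B C => by
      ext Γ t j k
      simp only [entry_mul, ← tsum_mul_left, ← tsum_mul_right, ← mul_assoc]
      have h := A.summable_mul_mul B C Γ t j k
      exact h.tsum_comm' (fun m => h.prod_factor m) fun n =>
        (A.summable_mul B Γ t j n).mul_right (C.entry Γ t n k)
    left_distrib := fun A B C => by
      ext Γ t j k
      simp only [entry_mul, entry_add, mul_add]
      exact (A.summable_mul B Γ t j k).tsum_add (A.summable_mul C Γ t j k)
    right_distrib := fun A B C => by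
      ext Γ t j k
      simp only [entry_mul, entry_add, add_mul]
      exact (A.summable_mul C Γ t j k).tsum_add (B.summable_mul C Γ t j k)
    one_mul := fun A => by
      ext Γ t j k
      rw [entry_mul, tsum_eq_single j fun m hm => by simp [entry_one, hm.symm]]
      simp [entry_one]
    mul_one := fun A => by
      ext Γ t j k
      rw [entry_mul, tsum_eq_single k fun m hm => by simp [entry_one, hm]]
      simp [entry_one]
    zero_mul := fun A => by ext Γ t j k; simp [entry_mul]
    mul_zero := fun A => by ext Γ t j k; simp [entry_mul] }

lemma mul_mem_order {A B : SymbolRing ι} (hA : A ∈ order ι a) (hB : B ∈ order ι b) :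
    A * B ∈ order ι (a + b) := fun l => (hA l).matMul (hB l)

lemma mul_mem_order_left {A : SymbolRing ι} (hA : A ∈ order ι a) (B : SymbolRing ι) :
    A * B ∈ order ι a := mul_mem_order hA B.mem_order_zero

lemma mul_mem_order_right {A : SymbolRing ι} (hA : A ∈ order ι a) (B : SymbolRing ι) :
    B * A ∈ order ι a := by simpa using mul_mem_order B.mem_order_zero hA

lemma pow_mem_order {A : SymbolRing ι} (hA : A ∈ order ι 1) (n : ℕ) : A ^ n ∈ order ι n := by
  induction n with
  | zero => exact mem_order_zero _
  | succ n ih => rw [pow_succ]; exact mul_mem_order ih hA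

lemma iDt_mul (A B : SymbolRing ι) : iDt (A * B) = iDt A * B + A * iDt B := by
  ext Γ t j k
  refine iDt_entry_eq ?_
  have hI := isMultiplier_const (ι := ι) (-Complex.I)
  have := A.rapidDecay.hasDerivAt_matMul B.rapidDecay ((iDt A).rapidDecay.schurMul hI)
    ((iDt B).rapidDecay.schurMul hI) A.hasDerivAt_entry B.hasDerivAt_entry Γ j k t
  convert! this using 1
  simp only [entry_add, entry_mul, Pi.add_apply, matMul, schurMul, mul_add, ← tsum_mul_left]
  congr 1 <;> exact tsum_congr fun m => by ring

end SymbolRing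

end Multiplicative

open SymbolRing

/-! ### The Heisenberg derivation -/

section Heisenberg

variable {ι : Type*} [SeminormedAddCommGroup ι]

/-- `B` is the matrix of `i ∂_t A - [D, A]`, where `D` is the diagonal matrix of the `μ j`.
This is a relation because the commutator of a symbol with `D` need not be a symbol. -/
def IsHeisenberg (μ : ι → ℝ) (A B : SymbolRing ι) : Prop :=
  ∀ Γ t j k, B.entry Γ t j k = (iDt A).entry Γ t j k - ((μ j : ℂ) - μ k) * A.entry Γ t j k

namespace IsHeisenberg

variable {μ : ι → ℝ} {A B A' B' : SymbolRing ι}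

lemma add (hA : IsHeisenberg μ A A') (hB : IsHeisenberg μ B B') :
    IsHeisenberg μ (A + B) (A' + B') := by
  intro Γ t j k
  simp only [map_add, entry_add, hA Γ t j k, hB Γ t j k]; ring

lemma neg (hA : IsHeisenberg μ A A') : IsHeisenberg μ (-A) (-A') := by
  intro Γ t j k
  simp only [map_neg, entry_neg, hA Γ t j k]; ring

lemma one : IsHeisenberg μ (1 : SymbolRing ι) 0 := by
  intro Γ t j k
  by_cases h : j = k <;> simp [iDt_one, entry_one, h]

lemma schur {m : Param → ι → ι → ℂ} (hm : IsMultiplier 0 m) (hA : IsHeisenberg μ A A') :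
    IsHeisenberg μ (SymbolRing.schur m hm A) (SymbolRing.schur m hm A') := by
  intro Γ t j k
  rw [iDt_schur, entry_schur, entry_schur, entry_schur, hA Γ t j k]; ring

variable [HasPolynomialGrowth ι]

lemma mul (hA : IsHeisenberg μ A A') (hB : IsHeisenberg μ B B') :
    IsHeisenberg μ (A * B) (A' * B + A * B') := by
  intro Γ t j k
  have hleft := (A'.summable_mul B Γ t j k).hasSum.add (A.summable_mul B' Γ t j k).hasSum
  have hright := (((iDt A).summable_mul B Γ t j k).hasSum.add
    (A.summable_mul (iDt B) Γ t j k).hasSum).sub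
    ((A.summable_mul B Γ t j k).hasSum.mul_left ((μ j : ℂ) - μ k))
  rw [iDt_mul]
  refine hleft.unique ?_
  convert! hright using 1
  funext m
  rw [hA Γ t j m, hB Γ t m k]; ring

lemma exists_pow_succ (hA : IsHeisenberg μ A A') (hA1 : A ∈ order ι 1) (n : ℕ) :
    ∃ P ∈ order ι n, IsHeisenberg μ (A ^ (n + 1)) P := by
  induction n with
  | zero => exact ⟨A', mem_order_zero _, by simpa using hA⟩
  | succ n ih =>
    obtain ⟨P, hP, h⟩ := ih
    refine ⟨_, ?_, by rw [pow_succ]; exact h.mul hA⟩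
    exact add_mem (mul_mem_order hP hA1) (mul_mem_order_left (pow_mem_order hA1 (n + 1)) A')

lemma exists_geom_sum (hA : IsHeisenberg μ A A') (hA1 : A ∈ order ι 1) (n : ℕ) :
    ∃ P, IsHeisenberg μ (∑ i ∈ Finset.range (n + 1), A ^ i) P := by
  induction n with
  | zero => exact ⟨0, by simpa using one⟩
  | succ n ih =>
    obtain ⟨P, h⟩ := ih
    obtain ⟨Q, -, h'⟩ := hA.exists_pow_succ hA1 n
    exact ⟨P + Q, by rw [Finset.sum_range_succ]; exact h.add h'⟩

end IsHeisenberg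

end Heisenberg

/-! ### Normal form -/

section NormalForm

variable {ι : Type*}

open scoped Classical in
/-- Restriction to the near-resonant entries, those with `|μ j - μ k| ≤ Γ`. -/
noncomputable def resonantMask (μ : ι → ℝ) (Γ : Param) (j k : ι) : ℂ :=
  if |μ j - μ k| ≤ Γ then 1 else 0

open scoped Classical in
/-- Division by `μ j - μ k` of the entries with `|μ j - μ k| > Γ`. -/
noncomputable def divisorMask (μ : ι → ℝ) (Γ : Param) (j k : ι) : ℂ :=
  if |μ j - μ k| ≤ Γ then 0 else ((μ j : ℂ) - μ k)⁻¹

variable [SeminormedAddCommGroup ι] {a b K : ℕ}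

lemma IsMultiplier.mono {m : Param → ι → ι → ℂ} (hab : b ≤ a) (hm : IsMultiplier a m) :
    IsMultiplier b m := by
  obtain ⟨C, hC, q, h⟩ := hm
  refine ⟨C, hC, q, fun Γ j k => (h Γ j k).trans ?_⟩
  have hΓ := Γ.pos
  gcongr
  exact Γ.one_le

variable (μ : ι → ℝ)

lemma isMultiplier_resonantMask : IsMultiplier 0 (resonantMask μ) := by
  refine ⟨1, zero_le_one, 0, fun Γ j k => ?_⟩
  unfold resonantMask
  split_ifs <;> simp

lemma isMultiplier_divisorMask : IsMultiplier 1 (divisorMask μ) := by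
  refine ⟨1, zero_le_one, 0, fun Γ j k => ?_⟩
  have hΓ := Γ.pos
  unfold divisorMask
  split_ifs with h
  · simpa using hΓ.le
  · rw [norm_inv, ← Complex.ofReal_sub, Complex.norm_real, Real.norm_eq_abs]
    simpa using inv_anti₀ hΓ (not_le.1 h).le

/-- The near-resonant part of a symbol. -/
noncomputable def resonantPart : SymbolRing ι →+ SymbolRing ι :=
  schur (resonantMask μ) (isMultiplier_resonantMask μ)

/-- The solution `X` of `[D, X] = F - resonantPart F`. -/
noncomputable def solveHomological : SymbolRing ι →+ SymbolRing ι :=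
  schur (divisorMask μ) ((isMultiplier_divisorMask μ).mono zero_le_one)

lemma resonantPart_mem_order {F : SymbolRing ι} (hF : F ∈ order ι a) :
    resonantPart μ F ∈ order ι a :=
  schur_mem_order _ (isMultiplier_resonantMask μ) hF

lemma solveHomological_mem_order {F : SymbolRing ι} (hF : F ∈ order ι a) :
    solveHomological μ F ∈ order ι (a + 1) :=
  schur_mem_order _ (isMultiplier_divisorMask μ) hF

lemma resonantPart_entry_of_lt (F : SymbolRing ι) {Γ : Param} {j k : ι} (t : ℝ)
    (hjk : (Γ : ℝ) < |μ j - μ k|) : (resonantPart μ F).entry Γ t j k = 0 := by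
  rw [resonantPart, entry_schur, resonantMask, if_neg hjk.not_ge, zero_mul]

lemma isHeisenberg_solveHomological (F : SymbolRing ι) :
    IsHeisenberg μ (solveHomological μ F)
      (iDt (solveHomological μ F) - F + resonantPart μ F) := by
  intro Γ t j k
  simp only [entry_add, entry_sub, solveHomological, resonantPart, entry_schur, resonantMask,
    divisorMask]
  split_ifs with h
  · simp
  · have hne : (μ j : ℂ) - μ k ≠ 0 := by
      rw [← Complex.ofReal_sub, Complex.ofReal_ne_zero]
      exact abs_pos.1 (Γ.pos.trans (not_le.1 h))
    field_simp
    ring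

variable [HasPolynomialGrowth ι] (V : SymbolRing ι)

/-- The symbol `F` for which `[D, X] = F - Z` says that `1 + X` conjugates `D + V` to `D + Z`,
as a function of `(X, Z)`. -/
noncomputable def normalFormRhs (x : SymbolRing ι × SymbolRing ι) : SymbolRing ι :=
  V + x.1 * V + iDt x.1 - x.2 * x.1

/-- The approximations of the pair `(X, Z)` obtained by solving for `X` the equation
`[D, X] = F - Z`, with `Z` the near-resonant part of `F`, for the `F` given by the previous pair. -/
noncomputable def normalFormIterate : ℕ → SymbolRing ι × SymbolRing ι
  | 0 => (0, 0)
  | n + 1 => (solveHomological μ (normalFormRhs V (normalFormIterate n)),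
      resonantPart μ (normalFormRhs V (normalFormIterate n)))

lemma normalFormIterate_fst_mem_order (n : ℕ) : (normalFormIterate μ V n).1 ∈ order ι 1 := by
  cases n with
  | zero => exact zero_mem _
  | succ n => exact solveHomological_mem_order μ (mem_order_zero _)

lemma normalFormRhs_sub_mem_order {n : ℕ} {x y : SymbolRing ι × SymbolRing ι}
    (hx : x.1 ∈ order ι 1) (hX : y.1 - x.1 ∈ order ι (n + 1)) (hZ : y.2 - x.2 ∈ order ι n) :
    normalFormRhs V y - normalFormRhs V x ∈ order ι (n + 1) := by
  have h : normalFormRhs V y - normalFormRhs V x = (y.1 - x.1) * V + iDt (y.1 - x.1)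
      - y.2 * (y.1 - x.1) - (y.2 - x.2) * x.1 := by
    simp only [normalFormRhs, map_sub]; noncomm_ring
  rw [h]
  exact sub_mem (sub_mem (add_mem (mul_mem_order_left hX _) (iDt_mem_order hX))
    (mul_mem_order_right hX _)) (mul_mem_order hZ hx)

lemma normalFormIterate_succ_sub_mem_order (n : ℕ) :
    (normalFormIterate μ V (n + 1)).1 - (normalFormIterate μ V n).1 ∈ order ι (n + 1) ∧
      (normalFormIterate μ V (n + 1)).2 - (normalFormIterate μ V n).2 ∈ order ι n := by
  induction n with
  | zero =>
    exact ⟨sub_mem (normalFormIterate_fst_mem_order μ V 1) (zero_mem _), mem_order_zero _⟩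
  | succ n ih =>
    have h := normalFormRhs_sub_mem_order V (normalFormIterate_fst_mem_order μ V n) ih.1 ih.2
    rw [normalFormIterate, normalFormIterate, ← map_sub, ← map_sub]
    exact ⟨solveHomological_mem_order μ h, resonantPart_mem_order μ h⟩

theorem exists_normalForm (K : ℕ) : ∃ X X' Z R : SymbolRing ι,
    X ∈ order ι 1 ∧ R ∈ order ι K ∧ IsHeisenberg μ X X' ∧
      X' = Z * (1 + X) - (1 + X) * V + R ∧
      ∀ (Γ : Param) t j k, (Γ : ℝ) < |μ j - μ k| → Z.entry Γ t j k = 0 := by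
  have h := normalFormIterate_succ_sub_mem_order μ V K
  have hR := normalFormRhs_sub_mem_order V (normalFormIterate_fst_mem_order μ V K) h.1 h.2
  refine ⟨(normalFormIterate μ V (K + 1)).1, _, (normalFormIterate μ V (K + 1)).2, _,
    normalFormIterate_fst_mem_order μ V _, order_mono (Nat.le_succ K) hR,
    isHeisenberg_solveHomological μ (normalFormRhs V (normalFormIterate μ V K)), ?_,
    fun Γ t j k => resonantPart_entry_of_lt μ _ t⟩
  change iDt (normalFormIterate μ V (K + 1)).1 - _ + (normalFormIterate μ V (K + 1)).2 = _
  rw [normalFormRhs.eq_1 V (normalFormIterate μ V (K + 1))]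
  noncomm_ring

variable {μ V}

lemma eq_mul_sub_mul_add_of_approxInverse {A : Type*} [Ring A] {S T S' T' V Z R E P : A}
    (hST : S * T = 1 - E) (hTS : T * S = 1 - E) (hderiv : T' * S + T * S' = -P)
    (hS' : S' = Z * S - S * V + R) :
    T' = V * T - T * Z + (T' * E + T * Z * E - P * T - E * V * T - T * R * T) :=
  calc T' = T' * (S * T) + T' * E := by rw [hST]; noncomm_ring
    _ = (T' * S + T * S') * T - T * S' * T + T' * E := by noncomm_ring
    _ = -P * T - (T * Z * (S * T) - (T * S) * V * T + T * R * T) + T' * E := by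
        rw [hderiv, hS']; noncomm_ring
    _ = _ := by rw [hST, hTS]; noncomm_ring

/-- The approximate inverse is the truncated Neumann series of `1 + X`. -/
theorem exists_approxInverse {X X' Z R : SymbolRing ι}
    (hX : X ∈ order ι 1) (hR : R ∈ order ι K)
    (hXX' : IsHeisenberg μ X X') (hX' : X' = Z * (1 + X) - (1 + X) * V + R) :
    ∃ T T' R' : SymbolRing ι, T - 1 ∈ order ι 1 ∧ R' ∈ order ι K ∧ IsHeisenberg μ T T' ∧
      T' = V * T - T * Z + R' := by
  have hnegX : -X ∈ order ι 1 := neg_mem hX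
  obtain ⟨T', hT'⟩ := hXX'.neg.exists_geom_sum hnegX K
  obtain ⟨P, hP, hPX⟩ := hXX'.neg.exists_pow_succ hnegX K
  have hTS := geom_sum_mul_neg (-X) (K + 1)
  have hST := mul_neg_geom_sum (-X) (K + 1)
  rw [sub_neg_eq_add] at hTS hST
  have hderiv : T' * (1 + X) + (∑ i ∈ Finset.range (K + 1), (-X) ^ i) * X' = -P := by
    have h₁ := hT'.mul (IsHeisenberg.one.add hXX')
    have h₂ := (IsHeisenberg.one (μ := μ)).add hPX.neg
    rw [hTS, sub_eq_add_neg] at h₁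
    rw [zero_add] at h₁ h₂
    ext Γ t j k
    rw [h₁ Γ t j k, h₂ Γ t j k]
  have hE : (-X) ^ (K + 1) ∈ order ι K :=
    order_mono (Nat.le_succ K) (pow_mem_order hnegX (K + 1))
  refine ⟨_, T', _, ?_, ?_, hT', eq_mul_sub_mul_add_of_approxInverse hST hTS hderiv hX'⟩
  · rw [Finset.sum_range_succ', pow_zero, add_sub_cancel_right]
    exact sum_mem fun i _ => order_mono (Nat.le_add_left 1 i) (pow_mem_order hnegX (i + 1))
  · exact sub_mem (sub_mem (sub_mem (add_mem (mul_mem_order_right hE _)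
      (mul_mem_order_right hE _)) (mul_mem_order_left hP _))
      (mul_mem_order_left (mul_mem_order_left hE _) _))
      (mul_mem_order_left (mul_mem_order_right hR _) _)

end NormalForm

/-! ### Conjugation by weights -/

section Weights

variable {ι : Type*} [SeminormedAddCommGroup ι] {μ : ι → ℝ} {w : Param → ι → ℝ} {a K : ℕ}

/-- Families of positive weights of at most polynomial variation, uniformly in `Γ`. -/
structure IsModerateWeight (w : Param → ι → ℝ) : Prop where
  pos : ∀ Γ j, 0 < w Γ j
  moderate : ∃ C : ℝ, 0 ≤ C ∧ ∃ q : ℕ, ∀ Γ j k, w Γ j ≤ C * w Γ k * (1 + ‖j - k‖) ^ q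

/-- The multiplier `w j / w k`. -/
noncomputable def ratio {ι : Type*} (w : Param → ι → ℝ) (Γ : Param) (j k : ι) : ℂ :=
  (w Γ j / w Γ k : ℝ)

lemma ratio_inv {ι : Type*} (w : Param → ι → ℝ) (Γ : Param) (j k : ι) :
    ratio w⁻¹ Γ j k = ratio w Γ k j :=
  congrArg Complex.ofReal (inv_div_inv (w Γ j) (w Γ k))

namespace IsModerateWeight

lemma inv (hw : IsModerateWeight w) : IsModerateWeight w⁻¹ where
  pos Γ j := inv_pos.2 (hw.pos Γ j)
  moderate := by
    obtain ⟨C, hC, q, h⟩ := hw.moderate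
    refine ⟨C, hC, q, fun Γ j k => ?_⟩
    have hj := hw.pos Γ j
    have hk := hw.pos Γ k
    calc (w Γ j)⁻¹ = (w Γ j)⁻¹ * (w Γ k)⁻¹ * w Γ k := by field_simp
      _ ≤ (w Γ j)⁻¹ * (w Γ k)⁻¹ * (C * w Γ j * (1 + ‖k - j‖) ^ q) := by gcongr; exact h Γ k j
      _ = C * (w Γ k)⁻¹ * (1 + ‖j - k‖) ^ q := by rw [norm_sub_rev]; field_simp

lemma isMultiplier_ratio (hw : IsModerateWeight w) : IsMultiplier 0 (ratio w) := by
  obtain ⟨C, hC, q, h⟩ := hw.moderate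
  refine ⟨C, hC, q, fun Γ j k => ?_⟩
  have hj := hw.pos Γ j
  have hk := hw.pos Γ k
  rw [ratio, Complex.norm_real, Real.norm_of_nonneg (by positivity), div_le_iff₀ hk]
  calc w Γ j ≤ C * w Γ k * (1 + ‖j - k‖) ^ q := h Γ j k
    _ = _ := by rw [pow_zero]; ring

lemma ratio_mul (hw : IsModerateWeight w) (Γ : Param) (j n k : ι) :
    ratio w Γ j n * ratio w Γ n k = ratio w Γ j k := by
  rw [ratio, ratio, ratio, ← Complex.ofReal_mul, div_mul_div_cancel₀ (hw.pos Γ n).ne']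

lemma ratio_self (hw : IsModerateWeight w) (Γ : Param) (j : ι) : ratio w Γ j j = 1 := by
  rw [ratio, div_self (hw.pos Γ j).ne', Complex.ofReal_one]

/-- The conjugation `A ↦ w A w⁻¹` by the diagonal matrix with entries `w j`. -/
noncomputable def conj [HasPolynomialGrowth ι] (hw : IsModerateWeight w) :
    SymbolRing ι →+* SymbolRing ι :=
  { schur (ratio w) hw.isMultiplier_ratio with
    map_one' := by
      ext Γ t j k
      change ratio w Γ j k * (1 : SymbolRing ι).entry Γ t j k = _
      rw [entry_one]
      split_ifs with h
      · rw [h, hw.ratio_self, mul_one]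
      · rw [mul_zero]
    map_mul' := fun A B => by
      ext Γ t j k
      change ratio w Γ j k * ∑' n, _ = ∑' n, (ratio w Γ j n * _) * (ratio w Γ n k * _)
      rw [← tsum_mul_left]
      refine tsum_congr fun n => ?_
      rw [← hw.ratio_mul Γ j n k]
      ring }

variable [HasPolynomialGrowth ι] (hw : IsModerateWeight w)
include hw

lemma entry_conj (A : SymbolRing ι) (Γ : Param) (t : ℝ) (j k : ι) :
    (hw.conj A).entry Γ t j k = ratio w Γ j k * A.entry Γ t j k := rfl

lemma conj_mem_order {A : SymbolRing ι} (hA : A ∈ order ι a) : hw.conj A ∈ order ι a :=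
  schur_mem_order hw.isMultiplier_ratio hw.isMultiplier_ratio hA

end IsModerateWeight

lemma IsHeisenberg.conj [HasPolynomialGrowth ι] (hw : IsModerateWeight w) {A A' : SymbolRing ι}
    (h : IsHeisenberg μ A A') : IsHeisenberg μ (hw.conj A) (hw.conj A') :=
  h.schur hw.isMultiplier_ratio

/-- Moderate weights which are constant on pairs of points that are close together and have close
values of `μ`. -/
structure IsClusterWeight (μ : ι → ℝ) (w : Param → ι → ℝ) : Prop extends IsModerateWeight w where
  eq_of_near : ∀ (Γ : Param) j k, ‖j - k‖ ≤ Γ → |μ j - μ k| ≤ Γ → w Γ j = w Γ k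

open scoped Classical in
/-- Restriction to the far off-diagonal entries costs any power of `Γ⁻¹`, at the price of more
off-diagonal growth. -/
lemma IsMultiplier.of_far {m : Param → ι → ι → ℂ} (hm : IsMultiplier 0 m) (K : ℕ) :
    IsMultiplier K fun Γ j k => if ‖j - k‖ ≤ Γ then 0 else m Γ j k := by
  obtain ⟨C, hC, q, h⟩ := hm
  refine ⟨C, hC, q + K, fun Γ j k => ?_⟩
  have hΓ := Γ.pos
  beta_reduce
  split_ifs with hjk
  · rw [norm_zero]; positivity
  · have hfar : 1 ≤ ((Γ : ℝ) ^ K)⁻¹ * (1 + ‖j - k‖) ^ K := by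
      rw [inv_mul_eq_div, one_le_div (by positivity)]
      exact pow_le_pow_left₀ hΓ.le (by linarith [not_le.1 hjk]) K
    calc ‖m Γ j k‖ ≤ C * (1 + ‖j - k‖) ^ q := by simpa using h Γ j k
      _ ≤ C * (1 + ‖j - k‖) ^ q * (((Γ : ℝ) ^ K)⁻¹ * (1 + ‖j - k‖) ^ K) :=
          le_mul_of_one_le_right (by positivity) hfar
      _ = _ := by rw [pow_add]; ring

namespace IsClusterWeight

lemma inv (hw : IsClusterWeight μ w) : IsClusterWeight μ w⁻¹ where
  toIsModerateWeight := hw.toIsModerateWeight.inv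
  eq_of_near Γ j k hjk hμ := congrArg Inv.inv (hw.eq_of_near Γ j k hjk hμ)

variable [HasPolynomialGrowth ι]

lemma conj_sub_mem_order (hw : IsClusterWeight μ w) {Z : SymbolRing ι}
    (hZ : ∀ (Γ : Param) t j k, (Γ : ℝ) < |μ j - μ k| → Z.entry Γ t j k = 0) (K : ℕ) :
    hw.conj Z - Z ∈ order ι K := by
  classical
  have hw₀ := hw.toIsModerateWeight
  have hfar := schur_mem_order (hw.isMultiplier_ratio.of_far K |>.mono K.zero_le)
    (hw.isMultiplier_ratio.of_far K) Z.mem_order_zero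
  have hfar' := schur_mem_order ((isMultiplier_const 1).of_far K |>.mono K.zero_le)
    ((isMultiplier_const 1).of_far K) Z.mem_order_zero
  rw [zero_add] at hfar hfar'
  convert! sub_mem hfar hfar' using 1
  ext Γ t j k
  simp only [entry_sub, entry_schur, hw₀.entry_conj]
  split_ifs with hjk
  · by_cases hμ : |μ j - μ k| ≤ Γ
    · have h : ratio w Γ j k = 1 := by
        rw [← hw.ratio_self Γ j, ratio, ratio, hw.eq_of_near Γ j k hjk hμ]
      rw [h]; ring
    · simp [hZ Γ t j k (not_le.1 hμ)]
  · ring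

/-- The energy is `w⁻¹ T w · w (1 + X) w⁻¹`, where `1 + X` conjugates `D + V` to its normal form
`D + Z` and `T` is its approximate inverse: conjugation by the weight hardly changes `Z`, so the
contributions of `Z` cancel. -/
theorem exists_energySymbol (hw : IsClusterWeight μ w) (V : SymbolRing ι) (K : ℕ) :
    ∃ A A' R : SymbolRing ι, A - 1 ∈ order ι 1 ∧ R ∈ order ι K ∧ IsHeisenberg μ A A' ∧
      A' = hw.inv.conj V * A - A * hw.conj V + R := by
  obtain ⟨X, X', Z, R, hX, hR, hXX', hX', hZ⟩ := exists_normalForm μ V K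
  obtain ⟨T, T', R', hT, hR', hTT', hT'⟩ := exists_approxInverse hX hR hXX' hX'
  have hw₁ := hw.toIsModerateWeight
  have hw₂ := hw.inv.toIsModerateWeight
  have hZZ : hw.conj Z - hw.inv.conj Z ∈ order ι K := by
    simpa using sub_mem (hw.conj_sub_mem_order hZ K) (hw.inv.conj_sub_mem_order hZ K)
  have hT₁ := hw₂.conj_mem_order hT
  rw [map_sub, map_one] at hT₁
  refine ⟨hw.inv.conj T * (1 + hw.conj X), _,
    hw.inv.conj R' * (1 + hw.conj X) + hw.inv.conj T * hw.conj R
      + hw.inv.conj T * (hw.conj Z - hw.inv.conj Z) * (1 + hw.conj X), ?_, ?_,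
    (hTT'.conj hw₂).mul (IsHeisenberg.one.add (hXX'.conj hw₁)), ?_⟩
  · have h : hw.inv.conj T * (1 + hw.conj X) - 1
        = (hw.inv.conj T - 1) * (1 + hw.conj X) + hw.conj X := by noncomm_ring
    rw [h]
    exact add_mem (mul_mem_order_left hT₁ _) (hw₁.conj_mem_order hX)
  · exact add_mem (add_mem (mul_mem_order_left (hw₂.conj_mem_order hR') _)
      (mul_mem_order_right (hw₁.conj_mem_order hR) _))
      (mul_mem_order_left (mul_mem_order_right hZZ _) _)
  · simp only [hX', hT', map_add, map_sub, map_mul, map_one]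
    noncomm_ring

end IsClusterWeight

end Weights

/-! ### Quadratic forms -/

section Forms

variable {ι : Type*}

/-- The product of an infinite matrix and a vector. -/
noncomputable def mulVec (b : ι → ι → ℂ) (u : ι → ℂ) (j : ι) : ℂ := ∑' k, b j k * u k

/-- The sesquilinear form `⟨b u, v⟩` of an infinite matrix. It is a sum over pairs, in order to be
differentiated termwise. -/
noncomputable def form (b : ι → ι → ℂ) (u v : ι → ℂ) : ℂ :=
  ∑' x : ι × ι, b x.1 x.2 * u x.2 * star (v x.1)

/-- Membership in `ℓ²`. -/
def SquareSummable (u : ι → ℂ) : Prop := Summable fun j => ‖u j‖ ^ 2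

/-- The squared `ℓ²` norm. -/
noncomputable def sqNorm (u : ι → ℂ) : ℝ := ∑' j, ‖u j‖ ^ 2

lemma sqNorm_nonneg (u : ι → ℂ) : 0 ≤ sqNorm u := tsum_nonneg fun _ => sq_nonneg _

lemma SquareSummable.exists_norm_le {u : ι → ℂ} (hu : SquareSummable u) :
    ∃ M, ∀ j, ‖u j‖ ≤ M :=
  ⟨√(sqNorm u), fun j =>
    Real.le_sqrt_of_sq_le (hu.le_tsum j fun _ _ => sq_nonneg _)⟩

lemma sq_tsum_mul_le {w g : ι → ℝ} (hw₀ : ∀ k, 0 ≤ w k) (hw : Summable w) (hg₀ : ∀ k, 0 ≤ g k)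
    (hg : Summable fun k => w k * g k ^ 2) :
    (Summable fun k => w k * g k) ∧
      (∑' k, w k * g k) ^ 2 ≤ (∑' k, w k) * ∑' k, w k * g k ^ 2 := by
  have hwg (k : ι) : 0 ≤ w k * g k ^ 2 := mul_nonneg (hw₀ k) (sq_nonneg _)
  have hpos : 0 ≤ (∑' k, w k) * ∑' k, w k * g k ^ 2 :=
    mul_nonneg (tsum_nonneg hw₀) (tsum_nonneg hwg)
  have hfin (F : Finset ι) : ∑ k ∈ F, w k * g k ≤ √((∑' k, w k) * ∑' k, w k * g k ^ 2) := by
    refine Real.le_sqrt_of_sq_le ((Finset.sum_sq_le_sum_mul_sum_of_sq_le_mul F (fun k _ => hw₀ k)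
      (fun k _ => hwg k) fun k _ => (by ring : _ = _).le).trans ?_)
    exact mul_le_mul (hw.sum_le_tsum _ fun k _ => hw₀ k) (hg.sum_le_tsum _ fun k _ => hwg k)
      (Finset.sum_nonneg fun k _ => hwg k) (tsum_nonneg hw₀)
  have hs := summable_of_sum_le (fun k => mul_nonneg (hw₀ k) (hg₀ k)) hfin
  refine ⟨hs, ?_⟩
  rw [← Real.le_sqrt (tsum_nonneg fun k => mul_nonneg (hw₀ k) (hg₀ k)) hpos]
  exact hs.tsum_le_of_sum_le hfin

variable [SeminormedAddCommGroup ι] [HasPolynomialGrowth ι]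

variable (ι) in
/-- The total mass of the lattice weight. -/
noncomputable def latticeMass : ℝ := ∑' m : ι, latticeWeight m

variable (ι) in
lemma latticeMass_nonneg : 0 ≤ latticeMass ι := tsum_nonneg latticeWeight_nonneg

lemma hasSum_latticeWeight_mul_fst {g : ι → ℝ} (hg₀ : ∀ j, 0 ≤ g j) (hg : Summable g) :
    HasSum (fun x : ι × ι => latticeWeight (x.1 - x.2) * g x.1) (latticeMass ι * ∑' j, g j) := by
  have hfiber (j : ι) : ∑' k, latticeWeight (j - k) * g j = latticeMass ι * g j := by
    rw [tsum_mul_right, tsum_latticeWeight_sub, latticeMass]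
  have hs : Summable fun x : ι × ι => latticeWeight (x.1 - x.2) * g x.1 := by
    refine (summable_prod_of_nonneg fun x => mul_nonneg (latticeWeight_nonneg _) (hg₀ _)).2
      ⟨fun j => (summable_latticeWeight_sub j).mul_right (g j), ?_⟩
    simp only [hfiber]
    exact hg.mul_left _
  convert! hs.hasSum using 1
  rw [hs.tsum_prod]
  simp only [hfiber, tsum_mul_left]

lemma hasSum_latticeWeight_mul_snd {g : ι → ℝ} (hg₀ : ∀ j, 0 ≤ g j) (hg : Summable g) :
    HasSum (fun x : ι × ι => latticeWeight (x.1 - x.2) * g x.2) (latticeMass ι * ∑' j, g j) := by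
  convert! (Equiv.prodComm ι ι).hasSum_iff.2 (hasSum_latticeWeight_mul_fst hg₀ hg) using 2 with x
  simp [latticeWeight_sub_comm x.1]

/-- Domination of the entries of a matrix by the lattice weight. -/
structure IsDominated (c : ℝ) (b : ι → ι → ℂ) : Prop where
  nonneg : 0 ≤ c
  norm_le : ∀ j k, ‖b j k‖ ≤ c * latticeWeight (j - k)

namespace IsDominated

variable {b : ι → ι → ℂ} {c : ℝ} {u v : ι → ℂ}

lemma summable_norm_form (hb : IsDominated c b) (hu : SquareSummable u) (hv : SquareSummable v) :
    (Summable fun x : ι × ι => ‖b x.1 x.2 * u x.2 * star (v x.1)‖) ∧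
      ∑' x : ι × ι, ‖b x.1 x.2 * u x.2 * star (v x.1)‖ ≤
        c / 2 * latticeMass ι * (sqNorm u + sqNorm v) := by
  have hsum := ((hasSum_latticeWeight_mul_snd (fun j => sq_nonneg ‖u j‖) hu).add
    (hasSum_latticeWeight_mul_fst (fun j => sq_nonneg ‖v j‖) hv)).mul_left (c / 2)
  have hle (x : ι × ι) : ‖b x.1 x.2 * u x.2 * star (v x.1)‖ ≤ c / 2 *
      (latticeWeight (x.1 - x.2) * ‖u x.2‖ ^ 2 + latticeWeight (x.1 - x.2) * ‖v x.1‖ ^ 2) := by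
    have hw := mul_nonneg hb.nonneg (latticeWeight_nonneg (x.1 - x.2))
    have hamgm : ‖u x.2‖ * ‖v x.1‖ ≤ (‖u x.2‖ ^ 2 + ‖v x.1‖ ^ 2) / 2 := by
      linarith [two_mul_le_add_sq ‖u x.2‖ ‖v x.1‖]
    calc ‖b x.1 x.2 * u x.2 * star (v x.1)‖ = ‖b x.1 x.2‖ * (‖u x.2‖ * ‖v x.1‖) := by
          rw [norm_mul, norm_mul, norm_star, mul_assoc]
      _ ≤ (c * latticeWeight (x.1 - x.2)) * ((‖u x.2‖ ^ 2 + ‖v x.1‖ ^ 2) / 2) := by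
          gcongr
          exact hb.norm_le _ _
      _ = _ := by ring
  have hs := Summable.of_nonneg_of_le (fun _ => norm_nonneg _) hle hsum.summable
  refine ⟨hs, (hs.tsum_le_tsum hle hsum.summable).trans (le_of_eq ?_)⟩
  rw [hsum.tsum_eq, sqNorm, sqNorm]; ring

lemma norm_form_self_le (hb : IsDominated c b) (hu : SquareSummable u) :
    ‖form b u u‖ ≤ c * latticeMass ι * sqNorm u := by
  obtain ⟨hs, hle⟩ := hb.summable_norm_form hu hu
  refine (norm_tsum_le_tsum_norm hs).trans (hle.trans (le_of_eq ?_))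
  ring

lemma conjTranspose (hb : IsDominated c b) : IsDominated c fun k j => star (b j k) where
  nonneg := hb.nonneg
  norm_le k j := by
    rw [norm_star, latticeWeight_sub_comm]
    exact hb.norm_le j k

lemma summable_mulVec (hb : IsDominated c b) (hu : SquareSummable u) (j : ι) :
    Summable fun k => ‖b j k * u k‖ := by
  obtain ⟨M, hM⟩ := hu.exists_norm_le
  refine Summable.of_nonneg_of_le (fun _ => norm_nonneg _) (fun k => ?_)
    (((summable_latticeWeight_sub j).mul_left c).mul_right M)
  rw [norm_mul]
  exact mul_le_mul (hb.norm_le j k) (hM k) (norm_nonneg _) ((norm_nonneg _).trans (hb.norm_le j k))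

lemma norm_mulVec_sq_le (hb : IsDominated c b) (hu : SquareSummable u) (j : ι) :
    ‖mulVec b u j‖ ^ 2 ≤ c ^ 2 * latticeMass ι * ∑' k, latticeWeight (j - k) * ‖u k‖ ^ 2 := by
  have hs : Summable fun k => latticeWeight (j - k) * ‖u k‖ ^ 2 :=
    (hasSum_latticeWeight_mul_snd (fun k => sq_nonneg ‖u k‖) hu).summable.prod_factor j
  obtain ⟨hs₁, hcs⟩ := sq_tsum_mul_le (fun k => latticeWeight_nonneg (j - k))
    (summable_latticeWeight_sub j) (fun k => norm_nonneg (u k)) hs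
  have hle : ‖mulVec b u j‖ ≤ c * ∑' k, latticeWeight (j - k) * ‖u k‖ := by
    refine (norm_tsum_le_tsum_norm (hb.summable_mulVec hu j)).trans ?_
    rw [← tsum_mul_left]
    refine (hb.summable_mulVec hu j).tsum_le_tsum (fun k => ?_) (hs₁.mul_left c)
    rw [norm_mul, ← mul_assoc]
    gcongr
    exact hb.norm_le j k
  calc ‖mulVec b u j‖ ^ 2 ≤ (c * ∑' k, latticeWeight (j - k) * ‖u k‖) ^ 2 := by gcongr
    _ ≤ c ^ 2 * (latticeMass ι * ∑' k, latticeWeight (j - k) * ‖u k‖ ^ 2) := by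
        rw [mul_pow, latticeMass, ← tsum_latticeWeight_sub j]
        gcongr
    _ = _ := by ring

lemma squareSummable_mulVec (hb : IsDominated c b) (hu : SquareSummable u) :
    SquareSummable (mulVec b u) ∧ sqNorm (mulVec b u) ≤ (c * latticeMass ι) ^ 2 * sqNorm u := by
  have hsum := hasSum_latticeWeight_mul_snd (fun k => sq_nonneg ‖u k‖) hu
  have hmarginal := hsum.summable.prod.mul_left (c ^ 2 * latticeMass ι)
  have hs : SquareSummable (mulVec b u) := Summable.of_nonneg_of_le (fun _ => sq_nonneg _)
    (hb.norm_mulVec_sq_le hu) hmarginal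
  refine ⟨hs, (hs.tsum_le_tsum (hb.norm_mulVec_sq_le hu) hmarginal).trans (le_of_eq ?_)⟩
  rw [tsum_mul_left, ← hsum.summable.tsum_prod, hsum.tsum_eq, sqNorm]; ring

lemma form_eq_tsum_mulVec (hb : IsDominated c b) (hu : SquareSummable u) (hv : SquareSummable v) :
    form b u v = ∑' j, mulVec b u j * star (v j) := by
  rw [form, (hb.summable_norm_form hu hv).1.of_norm.tsum_prod]
  simp only [tsum_mul_right, mulVec]

lemma form_eq_tsum_mulVec_star (hb : IsDominated c b) (hu : SquareSummable u)
    (hv : SquareSummable v) :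
    form b u v = ∑' k, u k * star (mulVec (fun k j => star (b j k)) v k) := by
  have hs := (Equiv.prodComm ι ι).summable_iff.2 (hb.summable_norm_form hu hv).1.of_norm
  rw [form, ← (Equiv.prodComm ι ι).tsum_eq]
  refine hs.tsum_prod.trans (tsum_congr fun k => ?_)
  rw [mulVec, tsum_star, ← tsum_mul_left]
  refine tsum_congr fun j => ?_
  simp only [Function.comp_apply, Equiv.prodComm_apply, Prod.swap_prod_mk, star_mul', star_star]
  ring

end IsDominated

variable {u v : ι → ℂ}

namespace SymbolRing

variable (A B : SymbolRing ι) (Γ : Param) (t : ℝ)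

lemma exists_isDominated : ∃ c, ∀ Γ t, IsDominated c (A.entry Γ t) := by
  obtain ⟨c, hc, h⟩ := A.exists_norm_entry_le_latticeWeight
  exact ⟨c, fun Γ t => ⟨hc, h Γ t⟩⟩

lemma mulVec_entry_mul (hu : SquareSummable u) :
    mulVec ((A * B).entry Γ t) u = mulVec (A.entry Γ t) (mulVec (B.entry Γ t) u) := by
  obtain ⟨a, hA⟩ := A.exists_isDominated
  obtain ⟨b, hB⟩ := B.exists_isDominated
  obtain ⟨M, hM⟩ := hu.exists_norm_le
  funext j
  have hs : Summable (Function.uncurry fun k m =>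
      A.entry Γ t j k * B.entry Γ t k m * u m) := by
    refine Summable.of_norm_bounded ((hasSum_latticeWeight_mul_fst
      (fun k => latticeWeight_nonneg (j - k)) (summable_latticeWeight_sub j)).summable.mul_left
      (a * b * M)) fun x => ?_
    have hwA := mul_nonneg (hA Γ t).nonneg (latticeWeight_nonneg (j - x.1))
    have hwB := mul_nonneg (hB Γ t).nonneg (latticeWeight_nonneg (x.1 - x.2))
    calc ‖A.entry Γ t j x.1 * B.entry Γ t x.1 x.2 * u x.2‖
        = ‖A.entry Γ t j x.1‖ * ‖B.entry Γ t x.1 x.2‖ * ‖u x.2‖ := by rw [norm_mul, norm_mul]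
      _ ≤ (a * latticeWeight (j - x.1)) * (b * latticeWeight (x.1 - x.2)) * M := by
          gcongr
          · exact (hA Γ t).norm_le _ _
          · exact (hB Γ t).norm_le _ _
          · exact hM _
      _ = _ := by ring
  simp only [mulVec, entry_mul, ← tsum_mul_right, ← tsum_mul_left, ← mul_assoc]
  exact hs.tsum_comm

lemma form_entry_mul (hu : SquareSummable u) (hv : SquareSummable v) :
    form ((A * B).entry Γ t) u v = form (A.entry Γ t) (mulVec (B.entry Γ t) u) v := by
  obtain ⟨a, hA⟩ := A.exists_isDominated
  obtain ⟨b, hB⟩ := B.exists_isDominated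
  obtain ⟨c, hAB⟩ := (A * B).exists_isDominated
  rw [(hAB Γ t).form_eq_tsum_mulVec hu hv, A.mulVec_entry_mul B Γ t hu,
    (hA Γ t).form_eq_tsum_mulVec ((hB Γ t).squareSummable_mulVec hu).1 hv]

lemma form_entry_mul_star (hu : SquareSummable u) (hv : SquareSummable v) :
    form ((A * B).entry Γ t) u v =
      form (B.entry Γ t) u (mulVec (fun k j => star (A.entry Γ t j k)) v) := by
  obtain ⟨a, hA⟩ := A.exists_isDominated
  obtain ⟨b, hB⟩ := B.exists_isDominated
  rw [form_entry_mul A B Γ t hu hv,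
    (hA Γ t).form_eq_tsum_mulVec_star ((hB Γ t).squareSummable_mulVec hu).1 hv,
    (hB Γ t).form_eq_tsum_mulVec hu ((hA Γ t).conjTranspose.squareSummable_mulVec hv).1]

lemma form_entry_add (hu : SquareSummable u) (hv : SquareSummable v) :
    form ((A + B).entry Γ t) u v = form (A.entry Γ t) u v + form (B.entry Γ t) u v := by
  obtain ⟨a, hA⟩ := A.exists_isDominated
  obtain ⟨b, hB⟩ := B.exists_isDominated
  rw [form, form, form, ← ((hA Γ t).summable_norm_form hu hv).1.of_norm.tsum_add
    ((hB Γ t).summable_norm_form hu hv).1.of_norm]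
  simp only [entry_add, add_mul]

lemma form_entry_one (hu : SquareSummable u) :
    form ((1 : SymbolRing ι).entry Γ t) u u = (sqNorm u : ℂ) := by
  obtain ⟨c, h⟩ := (1 : SymbolRing ι).exists_isDominated
  rw [(h Γ t).form_eq_tsum_mulVec hu hu, sqNorm, Complex.ofReal_tsum]
  refine tsum_congr fun j => ?_
  rw [mulVec, tsum_eq_single j fun k hk => by simp [entry_one, hk.symm]]
  simp [entry_one, Complex.mul_conj, Complex.normSq_eq_norm_sq]

end SymbolRing

end Forms

/-! ### The energy estimate -/

section Energy

lemma le_two_mul_of_forall_le_add_half {α : Type*} {s : Set α} {y : α → ℝ} {c : ℝ}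
    (hbdd : BddAbove (y '' s)) (h : ∀ M, (∀ x ∈ s, y x ≤ M) → ∀ x ∈ s, y x ≤ c + M / 2) :
    ∀ x ∈ s, y x ≤ 2 * c := by
  intro x hx
  have hle (z) (hz : z ∈ s) : y z ≤ sSup (y '' s) := le_csSup hbdd ⟨z, hz, rfl⟩
  have hsup : sSup (y '' s) ≤ c + sSup (y '' s) / 2 := csSup_le ⟨_, x, hx, rfl⟩ (by
    rintro _ ⟨z, hz, rfl⟩
    exact h _ hle z hz)
  linarith [hle x hx]

lemma norm_tsum_sub_tsum_le {α E : Type*} [Countable α] [NormedAddCommGroup E] [NormedSpace ℝ E]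
    [CompleteSpace E] {f g : α → ℝ → E} {a b B κ : ℝ}
    (hfg : ∀ x s, HasDerivAt (f x) (g x s) s) (hf : ∀ s, Summable fun x => f x s)
    (hg : ∀ s ∈ Set.uIoc a b, Summable fun x => ‖g x s‖)
    (hB : ∀ s ∈ Set.uIoc a b, ∑' x, ‖g x s‖ ≤ B)
    (hκ : ∀ s ∈ Set.uIoc a b, ‖∑' x, g x s‖ ≤ κ) :
    ‖∑' x, f x b - ∑' x, f x a‖ ≤ κ * |b - a| := by
  have hmeas (x : α) : MeasureTheory.StronglyMeasurable (g x) := by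
    rw [funext fun s => (hfg x s).deriv.symm]
    exact stronglyMeasurable_deriv _
  have hint (x : α) : ∫ s in a..b, g x s = f x b - f x a := by
    refine intervalIntegral.integral_eq_sub_of_hasDerivAt (fun s _ => hfg x s) ?_
    rw [intervalIntegrable_iff]
    refine MeasureTheory.Measure.integrableOn_of_bounded (M := B) (by simp)
      (hmeas x).aestronglyMeasurable ?_
    exact (MeasureTheory.ae_restrict_iff' measurableSet_uIoc).2 (.of_forall fun s hs =>
      ((hg s hs).le_tsum x fun _ _ => norm_nonneg _).trans (hB s hs))
  have hsum : HasSum (fun x => ∫ s in a..b, g x s) (∫ s in a..b, ∑' x, g x s) := by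
    refine intervalIntegral.hasSum_integral_of_dominated_convergence (fun x s => ‖g x s‖)
      (fun x => (hmeas x).aestronglyMeasurable) (fun x => .of_forall fun s _ => le_rfl)
      (.of_forall hg) ?_ (.of_forall fun s hs => (hg s hs).of_norm.hasSum)
    rw [intervalIntegrable_iff]
    refine MeasureTheory.Measure.integrableOn_of_bounded (M := B) (by simp)
      (Measurable.aestronglyMeasurable ?_) ?_
    · have h : Measurable fun s => ∑' x, ‖g x s‖₊ :=
        Measurable.tsum fun x => (hmeas x).nnnorm.measurable
      simpa only [NNReal.coe_tsum, coe_nnnorm] using h.coe_nnreal_real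
    · exact (MeasureTheory.ae_restrict_iff' measurableSet_uIoc).2 (.of_forall fun s hs =>
        (Real.norm_of_nonneg (tsum_nonneg fun _ => norm_nonneg _)).trans_le (hB s hs))
  simp only [hint] at hsum
  rw [((hf b).hasSum.sub (hf a).hasSum).unique hsum]
  exact intervalIntegral.norm_integral_le_of_norm_le_const hκ

section Rate

variable {ι : Type*} {μ : ι → ℝ}

/-- The function `ψ` solves `i ψ' = (D + V) ψ`, where `D` is the diagonal matrix of the `μ j`. -/
def IsSchrodingerSolution (μ : ι → ℝ) (V : ℝ → ι → ι → ℂ) (ψ : ℝ → ι → ℂ) : Prop :=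
  ∀ j t, HasDerivAt (fun s => ψ s j) (-Complex.I * (μ j * ψ t j + mulVec (V t) (ψ t) j)) t

variable [SeminormedAddCommGroup ι] {A A' R V V' : SymbolRing ι}

/-- Up to the factor `-i`, the time derivative of the summand `x` of `form A ψ ψ` for a solution
`ψ` of `i ψ' = (D + V) ψ`, when `A'` is the Heisenberg derivative of `A`. The terms containing the
unbounded `D` are absorbed in `A'`. -/
noncomputable def energyRate (A A' V : SymbolRing ι) (Γ : Param) (t : ℝ) (u : ι → ℂ) (x : ι × ι) :
    ℂ :=
  A'.entry Γ t x.1 x.2 * u x.2 * star (u x.1)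
    + A.entry Γ t x.1 x.2 * mulVec (V.entry Γ t) u x.2 * star (u x.1)
    - A.entry Γ t x.1 x.2 * u x.2 * star (mulVec (V.entry Γ t) u x.1)

lemma hasDerivAt_energyDensity (hH : IsHeisenberg μ A A') {Γ : Param} {ψ : ℝ → ι → ℂ}
    (hψ : IsSchrodingerSolution μ (V.entry Γ) ψ) (x : ι × ι) (t : ℝ) :
    HasDerivAt (fun s => A.entry Γ s x.1 x.2 * ψ s x.2 * star (ψ s x.1))
      (-Complex.I * energyRate A A' V Γ t (ψ t) x) t := by
  have h := ((A.hasDerivAt_entry Γ x.1 x.2 t).mul (hψ x.2 t)).mul (hψ x.1 t).star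
  convert! h using 1
  rw [Pi.mul_apply, energyRate, hH Γ t x.1 x.2, star_mul', star_add, star_mul']
  simp only [star_neg, Complex.star_def, Complex.conj_I, Complex.conj_ofReal]
  ring

variable [HasPolynomialGrowth ι]

lemma HasPolynomialGrowth.countable (ι : Type*) [SeminormedAddCommGroup ι]
    [HasPolynomialGrowth ι] : Countable ι := by
  have h := (summable_latticeWeight (ι := ι)).countable_support
  have hsupp : Function.support (latticeWeight (ι := ι)) = Set.univ := by
    ext k
    simp only [Function.mem_support, latticeWeight, Set.mem_univ, iff_true]
    positivity
  exact Set.countable_univ_iff.1 (hsupp ▸ h)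

lemma exists_tsum_norm_energyRate_le (A A' V : SymbolRing ι) :
    ∃ B : ℝ, 0 ≤ B ∧ ∀ Γ t u, SquareSummable u →
      (Summable fun x => ‖energyRate A A' V Γ t u x‖) ∧
      ∑' x, ‖energyRate A A' V Γ t u x‖ ≤ B * sqNorm u := by
  obtain ⟨a, ha⟩ := A.exists_isDominated
  obtain ⟨a', ha'⟩ := A'.exists_isDominated
  obtain ⟨v, hv⟩ := V.exists_isDominated
  set S := latticeMass ι
  have hS : 0 ≤ S := latticeMass_nonneg ι
  have ha₀ := (ha ⟨1, le_rfl⟩ 0).nonneg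
  have ha₀' := (ha' ⟨1, le_rfl⟩ 0).nonneg
  refine ⟨a' * S + a * S * ((v * S) ^ 2 + 1), by positivity, fun Γ t u hu => ?_⟩
  obtain ⟨hVu, hVu_le⟩ := (hv Γ t).squareSummable_mulVec hu
  obtain ⟨h₁, h₁_le⟩ := (ha' Γ t).summable_norm_form hu hu
  obtain ⟨h₂, h₂_le⟩ := (ha Γ t).summable_norm_form hVu hu
  obtain ⟨h₃, h₃_le⟩ := (ha Γ t).summable_norm_form hu hVu
  have hsum := (h₁.add h₂).add h₃
  have hle (x : ι × ι) : ‖energyRate A A' V Γ t u x‖ ≤ _ :=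
    (norm_sub_le _ _).trans (add_le_add_left (norm_add_le _ _) _)
  have hs := Summable.of_nonneg_of_le (fun _ => norm_nonneg _) hle hsum
  refine ⟨hs, (hs.tsum_le_tsum hle hsum).trans ?_⟩
  rw [(h₁.add h₂).tsum_add h₃, h₁.tsum_add h₂]
  have hVu_le' : a * S * sqNorm (mulVec (V.entry Γ t) u) ≤ a * S * ((v * S) ^ 2 * sqNorm u) := by
    gcongr
  linarith

lemma tsum_energyRate (hA' : A' = V' * A - A * V + R)
    (hV : ∀ Γ t j k, V'.entry Γ t k j = star (V.entry Γ t j k)) {Γ : Param} {t : ℝ} {u : ι → ℂ}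
    (hu : SquareSummable u) :
    ∑' x, energyRate A A' V Γ t u x = form (R.entry Γ t) u u := by
  obtain ⟨a, ha⟩ := A.exists_isDominated
  obtain ⟨a', ha'⟩ := A'.exists_isDominated
  obtain ⟨v, hv⟩ := V.exists_isDominated
  have hVu := ((hv Γ t).squareSummable_mulVec hu).1
  have h₁ := ((ha' Γ t).summable_norm_form hu hu).1.of_norm
  have h₂ := ((ha Γ t).summable_norm_form hVu hu).1.of_norm
  have h₃ := ((ha Γ t).summable_norm_form hu hVu).1.of_norm
  have hV' : (fun k j => star (V'.entry Γ t j k)) = V.entry Γ t := by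
    funext k j
    rw [hV, star_star]
  have hright := A.form_entry_mul V Γ t hu hu
  have hleft := V'.form_entry_mul_star A Γ t hu hu
  rw [hV'] at hleft
  have hsum : A' + A * V = V' * A + R := by rw [hA']; abel
  calc ∑' x, energyRate A A' V Γ t u x
      = form (A'.entry Γ t) u u + form (A.entry Γ t) (mulVec (V.entry Γ t) u) u
        - form (A.entry Γ t) u (mulVec (V.entry Γ t) u) := by
        simp only [energyRate]
        rw [(h₁.add h₂).tsum_sub h₃, h₁.tsum_add h₂, form, form, form]
    _ = form ((A' + A * V).entry Γ t) u u - form ((V' * A).entry Γ t) u u := by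
        rw [form_entry_add _ _ _ _ hu hu, hright, hleft]
    _ = form (R.entry Γ t) u u := by
        rw [hsum, form_entry_add _ _ _ _ hu hu, add_sub_cancel_left]

lemma SymbolRing.exists_norm_form_le {a : ℕ} (hA : A ∈ order ι a) :
    ∃ C : ℝ, 0 ≤ C ∧ ∀ Γ t u, SquareSummable u →
      ‖form (A.entry Γ t) u u‖ ≤ C * ((Γ : ℝ) ^ a)⁻¹ * sqNorm u := by
  obtain ⟨C, hC, h⟩ := exists_norm_entry_le hA
  refine ⟨C * latticeMass ι, mul_nonneg hC (latticeMass_nonneg ι), fun Γ t u hu => ?_⟩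
  have hΓ := Γ.pos
  refine (IsDominated.norm_form_self_le ⟨by positivity, h Γ t⟩ hu).trans (le_of_eq ?_)
  ring

lemma exists_norm_form_sub_sqNorm_le (hA : A - 1 ∈ order ι 1) :
    ∃ C : ℝ, 0 ≤ C ∧ ∀ (Γ : Param) t u, C ≤ Γ → SquareSummable u →
      ‖form (A.entry Γ t) u u - sqNorm u‖ ≤ sqNorm u / 2 := by
  obtain ⟨C, hC, h⟩ := exists_norm_form_le hA
  refine ⟨2 * C, by positivity, fun Γ t u hΓ hu => ?_⟩
  have hsplit : form (A.entry Γ t) u u = form ((A - 1).entry Γ t) u u + sqNorm u := by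
    rw [← form_entry_one Γ t hu, ← form_entry_add _ _ _ _ hu hu, sub_add_cancel]
  rw [hsplit, add_sub_cancel_right]
  refine (h Γ t u hu).trans ?_
  rw [pow_one, div_eq_inv_mul]
  refine mul_le_mul_of_nonneg_right ?_ (sqNorm_nonneg u)
  rw [mul_inv_le_iff₀ Γ.pos]
  linarith

lemma exists_norm_form_sub_form_le {K : ℕ} (hR : R ∈ order ι K) (hH : IsHeisenberg μ A A')
    (hA' : A' = V' * A - A * V + R)
    (hV : ∀ Γ t j k, V'.entry Γ t k j = star (V.entry Γ t j k)) :
    ∃ C : ℝ, 0 ≤ C ∧ ∀ (Γ : Param) ψ, (∀ t, SquareSummable (ψ t)) →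
      IsSchrodingerSolution μ (V.entry Γ) ψ → ∀ a b Y, (∀ s ∈ Set.uIcc a b, sqNorm (ψ s) ≤ Y) →
      ‖form (A.entry Γ b) (ψ b) (ψ b) - form (A.entry Γ a) (ψ a) (ψ a)‖ ≤
        C * ((Γ : ℝ) ^ K)⁻¹ * Y * |b - a| := by
  obtain ⟨C, hC, hCR⟩ := exists_norm_form_le hR
  obtain ⟨B, hB₀, hB⟩ := exists_tsum_norm_energyRate_le A A' V
  obtain ⟨c, hc⟩ := A.exists_isDominated
  have := HasPolynomialGrowth.countable ι
  refine ⟨C, hC, fun Γ ψ hs hψ a b Y hY => ?_⟩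
  have hΓ := Γ.pos
  have hY' (s) (h : s ∈ Set.uIoc a b) : sqNorm (ψ s) ≤ Y := hY s (Set.uIoc_subset_uIcc h)
  refine norm_tsum_sub_tsum_le (B := B * Y) (fun x s => hasDerivAt_energyDensity hH hψ x s)
    (fun s => ((hc Γ s).summable_norm_form (hs s) (hs s)).1.of_norm) (fun s _ => ?_)
    (fun s h => ?_) (fun s h => ?_)
  · simpa only [norm_mul, norm_neg, Complex.norm_I, one_mul] using (hB Γ s _ (hs s)).1
  · simp only [norm_mul, norm_neg, Complex.norm_I, one_mul]
    exact (hB Γ s _ (hs s)).2.trans (mul_le_mul_of_nonneg_left (hY' s h) hB₀)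
  · rw [tsum_mul_left, tsum_energyRate hA' hV (hs s), norm_mul, norm_neg, Complex.norm_I, one_mul]
    exact (hCR Γ s _ (hs s)).trans (mul_le_mul_of_nonneg_left (hY' s h) (by positivity))

/-- The energy is comparable to the squared `ℓ²` norm and varies slowly, which bootstraps. -/
theorem exists_sqNorm_le {K : ℕ} (hA : A - 1 ∈ order ι 1) (hR : R ∈ order ι K)
    (hH : IsHeisenberg μ A A') (hA' : A' = V' * A - A * V + R)
    (hV : ∀ Γ t j k, V'.entry Γ t k j = star (V.entry Γ t j k)) :
    ∃ C : ℝ, 1 ≤ C ∧ ∀ (Γ : Param) (T : ℝ), C ≤ Γ → C * T ≤ (Γ : ℝ) ^ K →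
      ∀ ψ : ℝ → ι → ℂ, (∀ t, SquareSummable (ψ t)) → IsSchrodingerSolution μ (V.entry Γ) ψ →
      BddAbove ((fun t => sqNorm (ψ t)) '' Set.Icc (-T) T) →
      ∀ t ∈ Set.Icc (-T) T, sqNorm (ψ t) ≤ 6 * sqNorm (ψ 0) := by
  obtain ⟨C₁, hC₁, hclose⟩ := exists_norm_form_sub_sqNorm_le hA
  obtain ⟨C₂, hC₂, hgrow⟩ := exists_norm_form_sub_form_le hR hH hA' hV
  refine ⟨1 + C₁ + 4 * C₂, by linarith, fun Γ T hΓ hTΓ ψ hs hψ hbdd t ht => ?_⟩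
  have hΓ₀ := Γ.pos
  have hT : 0 ≤ T := by linarith [ht.1.trans ht.2]
  have h0 : (0 : ℝ) ∈ Set.Icc (-T) T := ⟨by linarith, hT⟩
  rw [show (6 : ℝ) * sqNorm (ψ 0) = 2 * (3 * sqNorm (ψ 0)) by ring]
  refine le_two_mul_of_forall_le_add_half hbdd (fun Y hY t ht => ?_) t ht
  have hY₀ : 0 ≤ Y := (sqNorm_nonneg _).trans (hY 0 h0)
  have hclose' (s : ℝ) := Complex.abs_re_le_norm _ |>.trans
    (hclose Γ s (ψ s) (by linarith) (hs s))
  have hslow : ‖form (A.entry Γ t) (ψ t) (ψ t) - form (A.entry Γ 0) (ψ 0) (ψ 0)‖ ≤ Y / 4 := by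
    refine (hgrow Γ ψ hs hψ 0 t Y fun s h => hY s (Set.uIcc_subset_Icc h0 ht h)).trans ?_
    calc C₂ * ((Γ : ℝ) ^ K)⁻¹ * Y * |t - 0| ≤ C₂ * ((Γ : ℝ) ^ K)⁻¹ * Y * T := by
          gcongr
          rw [sub_zero]
          exact abs_le.2 ht
      _ = (4 * C₂ * T) * ((Γ : ℝ) ^ K)⁻¹ * (Y / 4) := by ring
      _ ≤ 1 * (Y / 4) := by
          gcongr
          rw [mul_inv_le_iff₀ (by positivity)]
          nlinarith
      _ = Y / 4 := one_mul _
  have hre := (Complex.abs_re_le_norm _).trans hslow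
  have ht' := hclose' t
  have h0' := hclose' 0
  simp only [Complex.sub_re, Complex.ofReal_re, abs_le] at hre ht' h0'
  linarith

end Rate

end Energy

/-! ### Integer vectors -/

section IntegerVectors

open Matrix

variable {d : ℕ}

lemma abs_adjugate_le {n : Type*} [Fintype n] [DecidableEq n] {H : Matrix n n ℝ} {M : ℝ}
    (hM : 1 ≤ M) (hH : ∀ i k, |H i k| ≤ M) (i k : n) :
    |H.adjugate i k| ≤ (Fintype.card n).factorial * M ^ Fintype.card n := by
  rw [adjugate_apply, ← nsmul_eq_mul]
  refine det_le (abv := AbsoluteValue.abs) fun a b => ?_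
  rw [AbsoluteValue.abs_apply, updateRow_apply, Pi.single_apply]
  split_ifs
  · rwa [abs_one]
  · rw [abs_zero]; exact zero_le_one.trans hM
  · exact hH a b

lemma abs_dotProduct_le {m : Type*} [Fintype m] (x y : m → ℝ) :
    |x ⬝ᵥ y| ≤ Fintype.card m * ‖x‖ * ‖y‖ := by
  calc |x ⬝ᵥ y| ≤ ∑ i, |x i * y i| := Finset.abs_sum_le_sum_abs _ _
    _ ≤ ∑ _i : m, ‖x‖ * ‖y‖ := by
        gcongr with i
        rw [abs_mul]
        exact mul_le_mul (norm_le_pi_norm x i) (norm_le_pi_norm y i) (abs_nonneg _) (norm_nonneg _)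
    _ = Fintype.card m * ‖x‖ * ‖y‖ := by simp [mul_assoc]

lemma sq_norm_le_dotProduct_self {m : Type*} [Fintype m] (x : m → ℝ) : ‖x‖ ^ 2 ≤ x ⬝ᵥ x := by
  have h : 0 ≤ x ⬝ᵥ x := Finset.sum_nonneg fun i _ => mul_self_nonneg (x i)
  rw [← Real.le_sqrt (norm_nonneg x) h]
  refine (pi_norm_le_iff_of_nonneg (Real.sqrt_nonneg _)).2 fun i => Real.le_sqrt_of_sq_le ?_
  rw [Real.norm_eq_abs, sq_abs, sq]
  exact Finset.single_le_sum (f := fun i => x i * x i) (fun i _ => mul_self_nonneg (x i))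
    (Finset.mem_univ i)

/-- The embedding of `ℤ^d` into `ℝ^d`. -/
def toReal : (Fin d → ℤ) →+ (Fin d → ℝ) := (Int.castAddHom ℝ).compLeft (Fin d)

lemma norm_toReal (x : Fin d → ℤ) : ‖toReal x‖ = ‖x‖ := rfl

/-- The Gram matrix of a family of integer vectors, with real entries. -/
def gramMatrix {n : Type*} (f : n → Fin d → ℤ) : Matrix n n ℝ :=
  Matrix.of fun i k => toReal (f i) ⬝ᵥ toReal (f k)

section Gram

variable {n : Type*} [Fintype n] {f : n → Fin d → ℤ}

lemma gramMatrix_mulVec (f : n → Fin d → ℤ) (c : n → ℝ) :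
    gramMatrix f *ᵥ c = fun i => toReal (f i) ⬝ᵥ ∑ k, c k • toReal (f k) := by
  ext i
  rw [dotProduct_sum]
  exact Finset.sum_congr rfl fun k _ => by rw [dotProduct_smul, smul_eq_mul, mul_comm]; rfl

lemma one_le_abs_det_gramMatrix [DecidableEq n] (hf : LinearIndependent ℝ fun i => toReal (f i)) :
    1 ≤ |(gramMatrix f).det| := by
  have hdet : (gramMatrix f).det ≠ 0 := by
    intro h0
    obtain ⟨v, hv, hv0⟩ := exists_mulVec_eq_zero_iff.2 h0
    rw [gramMatrix_mulVec] at hv0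
    have hself : (∑ i, v i • toReal (f i)) ⬝ᵥ (∑ i, v i • toReal (f i)) = 0 := by
      rw [sum_dotProduct]
      exact Finset.sum_eq_zero fun k _ => by
        rw [smul_dotProduct, congrFun hv0 k, Pi.zero_apply, smul_zero]
    exact hv (funext (Fintype.linearIndependent_iff.1 hf v (dotProduct_self_eq_zero.1 hself)))
  have hint : gramMatrix f = (Matrix.of fun i k => f i ⬝ᵥ f k).map (Int.castRingHom ℝ) := by
    ext i k
    exact ((Int.castRingHom ℝ).map_dotProduct (f i) (f k)).symm
  rw [hint, ← RingHom.mapMatrix_apply, ← RingHom.map_det, eq_intCast] at hdet ⊢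
  exact_mod_cast Int.one_le_abs (Int.cast_ne_zero.1 hdet)

lemma det_gramMatrix_mul [DecidableEq n] (f : n → Fin d → ℤ) (c : n → ℝ) (i : n) :
    (gramMatrix f).det * c i =
      ∑ k, (gramMatrix f).adjugate i k * (toReal (f k) ⬝ᵥ ∑ l, c l • toReal (f l)) := by
  have h := congrArg (fun M => (M *ᵥ c) i) (gramMatrix f).adjugate_mul
  simp only [← mulVec_mulVec, smul_mulVec, one_mulVec, Pi.smul_apply, smul_eq_mul] at h
  rw [← h, gramMatrix_mulVec]
  rfl

lemma abs_coord_le (hf : LinearIndependent ℝ fun i => toReal (f i)) {ρ : ℝ} (hρ : 1 ≤ ρ)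
    (hfρ : ∀ i, ‖f i‖ ≤ ρ) (c : n → ℝ) (i : n) :
    |c i| ≤ d.factorial * ((d + 1) * ρ ^ 2) ^ d * (d ^ 2 * ρ) * ‖∑ k, c k • toReal (f k)‖ := by
  classical
  have hcard : Fintype.card n ≤ d := by simpa using hf.fintype_card_le_finrank
  set y := ∑ k, c k • toReal (f k)
  set G := gramMatrix f
  have hM : 1 ≤ ((d : ℝ) + 1) * ρ ^ 2 :=
    one_le_mul_of_one_le_of_one_le (by simp) (one_le_pow₀ hρ)
  have hdot (k) (x : Fin d → ℝ) : |toReal (f k) ⬝ᵥ x| ≤ d * ρ * ‖x‖ := by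
    refine (abs_dotProduct_le _ _).trans ?_
    rw [norm_toReal, Fintype.card_fin]
    gcongr
    exact hfρ k
  have hentry (k l) : |G k l| ≤ (d + 1) * ρ ^ 2 := by
    calc |G k l| ≤ d * ρ * ‖toReal (f l)‖ := hdot k _
      _ ≤ (d + 1) * ρ * ρ := by
        gcongr
        · linarith
        · exact hfρ l
      _ = (d + 1) * ρ ^ 2 := by ring
  have hadj (k) : |G.adjugate i k| ≤ d.factorial * ((d + 1) * ρ ^ 2) ^ d := by
    refine (abs_adjugate_le hM hentry i k).trans ?_
    gcongr
  calc |c i| ≤ |G.det| * |c i| :=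
        le_mul_of_one_le_left (abs_nonneg _) (one_le_abs_det_gramMatrix hf)
    _ = |∑ k, G.adjugate i k * (toReal (f k) ⬝ᵥ y)| := by rw [← abs_mul, det_gramMatrix_mul f c i]
    _ ≤ ∑ k, |G.adjugate i k| * |toReal (f k) ⬝ᵥ y| := by
        simpa only [abs_mul] using Finset.abs_sum_le_sum_abs
          (fun k => G.adjugate i k * (toReal (f k) ⬝ᵥ y)) Finset.univ
    _ ≤ ∑ _k : n, d.factorial * ((d + 1) * ρ ^ 2) ^ d * (d * ρ * ‖y‖) := by
        gcongr with k
        · exact hadj k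
        · exact hdot k y
    _ = Fintype.card n * (d.factorial * ((d + 1) * ρ ^ 2) ^ d * (d * ρ * ‖y‖)) := by simp
    _ ≤ d * (d.factorial * ((d + 1) * ρ ^ 2) ^ d * (d * ρ * ‖y‖)) := by gcongr
    _ = _ := by ring

end Gram

lemma exists_abs_le_of_mem_span (d : ℕ) : ∃ C : ℝ, 0 ≤ C ∧ ∀ ρ : ℝ, 1 ≤ ρ →
    ∀ F : Set (Fin d → ℤ), (∀ f ∈ F, ‖f‖ ≤ ρ) → ∀ (φ : (Fin d → ℝ) →ₗ[ℝ] ℝ) (m : ℝ),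
    (∀ f ∈ F, |φ (toReal f)| ≤ m) → ∀ y ∈ Submodule.span ℝ (toReal '' F),
    |φ y| ≤ C * ρ ^ (2 * d + 1) * m * ‖y‖ := by
  classical
  refine ⟨d * (d.factorial * (d + 1) ^ d * d ^ 2), by positivity, fun ρ hρ F hF φ m hφ y hy => ?_⟩
  obtain ⟨t, htF, htspan, htind⟩ := exists_linearIndependent ℝ (toReal '' F)
  have : Fintype t := htind.setFinite.fintype
  choose f hfF hf using fun x : t => htF x.2
  obtain rfl | hm : t = ∅ ∨ 0 ≤ m := t.eq_empty_or_nonempty.imp_right fun ⟨x, hx⟩ =>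
    (abs_nonneg _).trans (hφ _ (hfF ⟨x, hx⟩))
  · rw [← htspan, Submodule.span_empty, Submodule.mem_bot] at hy
    simp [hy]
  have hfeq : (fun x : t => toReal (f x)) = ((↑) : t → Fin d → ℝ) := funext hf
  have hind : LinearIndependent ℝ fun x : t => toReal (f x) := by rwa [hfeq]
  have hcard : Fintype.card t ≤ d := by simpa using hind.fintype_card_le_finrank
  rw [← htspan, ← Subtype.range_coe (s := t), ← hfeq,
    Submodule.mem_span_range_iff_exists_fun] at hy
  obtain ⟨c, rfl⟩ := hy
  set Y := ‖∑ k, c k • toReal (f k)‖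
  calc |φ (∑ k, c k • toReal (f k))| ≤ ∑ k, |φ (c k • toReal (f k))| := by
        rw [map_sum]
        exact Finset.abs_sum_le_sum_abs _ _
    _ ≤ ∑ _k : t, d.factorial * ((d + 1) * ρ ^ 2) ^ d * (d ^ 2 * ρ) * Y * m := by
        gcongr with k
        rw [map_smul, smul_eq_mul, abs_mul]
        exact mul_le_mul (abs_coord_le hind hρ (fun i => hF _ (hfF i)) c k) (hφ _ (hfF k))
          (abs_nonneg _) (by positivity)
    _ = Fintype.card t * (d.factorial * ((d + 1) * ρ ^ 2) ^ d * (d ^ 2 * ρ) * Y * m) := by simp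
    _ ≤ d * (d.factorial * ((d + 1) * ρ ^ 2) ^ d * (d ^ 2 * ρ) * Y * m) := by gcongr
    _ = _ := by rw [mul_pow, ← pow_mul, pow_succ]; ring

lemma length_le_of_injOn {L : ℕ} {j : ℕ → Fin d → ℤ} (hj : Set.InjOn j (Set.Iic L)) {ρ : ℝ}
    (hρ : 1 ≤ ρ) (hjρ : ∀ i ≤ L, ‖j i - j 0‖ ≤ ρ) : (L : ℝ) ≤ (3 * ρ) ^ d := by
  set N := ⌊ρ⌋₊
  have hN : (N : ℝ) ≤ ρ := Nat.floor_le (by linarith)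
  have hmaps : Set.MapsTo j (Finset.Iic L)
      (Finset.Icc (j 0 - fun _ => (N : ℤ)) (j 0 + fun _ => (N : ℤ))) := by
    intro i hi
    rw [Finset.coe_Iic, Set.mem_Iic] at hi
    have hcoord (a) : |j i a - j 0 a| ≤ (N : ℤ) := by
      have h := (norm_le_pi_norm (j i - j 0) a).trans (hjρ i hi)
      rw [Pi.sub_apply, Int.norm_eq_abs, ← Int.cast_abs, Int.abs_eq_natAbs, Int.cast_natCast] at h
      rw [Int.abs_eq_natAbs]
      exact_mod_cast Nat.le_floor h
    rw [Finset.coe_Icc, Set.mem_Icc, Pi.le_def, Pi.le_def]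
    simp only [Pi.sub_apply, Pi.add_apply]
    constructor <;> intro a <;> linarith [abs_le.1 (hcoord a)]
  have hcard := Finset.card_le_card_of_injOn j hmaps (by rwa [Finset.coe_Iic])
  have hside (a : Fin d) : (Finset.Icc ((j 0 - fun _ => (N : ℤ) : Fin d → ℤ) a)
      ((j 0 + fun _ => (N : ℤ) : Fin d → ℤ) a)).card = 2 * N + 1 := by
    rw [Int.card_Icc, Pi.sub_apply, Pi.add_apply]; omega
  rw [Nat.card_Iic, Pi.card_Icc, Finset.prod_congr rfl fun a _ => hside a, Finset.prod_const,
    Finset.card_univ, Fintype.card_fin] at hcard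
  calc (L : ℝ) ≤ ((L + 1 : ℕ) : ℝ) := by push_cast; linarith
    _ ≤ (((2 * N + 1) ^ d : ℕ) : ℝ) := by exact_mod_cast hcard
    _ = (2 * N + 1) ^ d := by push_cast; rfl
    _ ≤ (3 * ρ) ^ d := by gcongr; linarith

end IntegerVectors

open Matrix

/-! ### Separation of clusters -/

section Chains

variable {ι : Type*} [SeminormedAddCommGroup ι] {μ : ι → ℝ} {Γ : ℝ} {L : ℕ} {j : ℕ → ι}

/-- A sequence `j 0, …, j L` with small jumps, along which `μ` has small jumps as well. -/
def IsClusterChain (μ : ι → ℝ) (Γ : ℝ) (L : ℕ) (j : ℕ → ι) : Prop :=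
  ∀ i < L, ‖j (i + 1) - j i‖ ≤ Γ ∧ |μ (j (i + 1)) - μ (j i)| ≤ Γ

namespace IsClusterChain

lemma shift (h : IsClusterChain μ Γ L j) {s n : ℕ} (hs : s + n ≤ L) :
    IsClusterChain μ Γ n fun i => j (s + i) := fun i hi => h (s + i) (by omega)

lemma displacement_le (h : IsClusterChain μ Γ L j) (p : ℕ) :
    ∀ n : ℕ, p + n ≤ L → ‖j (p + n) - j p‖ ≤ n * Γ ∧ |μ (j (p + n)) - μ (j p)| ≤ n * Γ
  | 0, _ => by simp
  | n + 1, hn => by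
    have ⟨hj, hμ⟩ := h.displacement_le p n (by omega)
    have ⟨hj', hμ'⟩ := h (p + n) (by omega)
    rw [← add_assoc]
    push_cast
    constructor
    · linarith [norm_sub_le_norm_sub_add_norm_sub (j (p + n + 1)) (j (p + n)) (j p)]
    · linarith [abs_sub_le (μ (j (p + n + 1))) (μ (j (p + n))) (μ (j p))]

lemma displacement_le_of_le (h : IsClusterChain μ Γ L j) (hΓ : 0 ≤ Γ) {p q n : ℕ} (hp : p ≤ L)
    (hq : q ≤ L) (hpq : p ≤ q + n) (hqp : q ≤ p + n) :
    ‖j q - j p‖ ≤ n * Γ ∧ |μ (j q) - μ (j p)| ≤ n * Γ := by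
  wlog hle : p ≤ q generalizing p q
  · rw [norm_sub_rev, abs_sub_comm]
    exact this hq hp hqp hpq (le_of_not_ge hle)
  obtain ⟨m, rfl⟩ := Nat.exists_eq_add_of_le hle
  have hm : (m : ℝ) * Γ ≤ n * Γ := by gcongr; omega
  exact (h.displacement_le p m hq).imp hm.trans' hm.trans'

end IsClusterChain

end Chains

section Forms

variable {d : ℕ} {c : ℝ} {B : LinearMap.BilinForm ℝ (Fin d → ℝ)}

/-- Symmetric bilinear forms whose quadratic form is comparable to the square of the norm. -/
structure IsComparable (c : ℝ) (B : LinearMap.BilinForm ℝ (Fin d → ℝ)) : Prop where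
  isSymm : B.IsSymm
  one_le : 1 ≤ c
  sq_norm_le : ∀ x, ‖x‖ ^ 2 ≤ c * B x x
  le_sq_norm : ∀ x, B x x ≤ c * ‖x‖ ^ 2

/-- The restriction to the lattice of the quadratic form of `B`. -/
def latticeForm (B : LinearMap.BilinForm ℝ (Fin d → ℝ)) (j : Fin d → ℤ) : ℝ :=
  B (toReal j) (toReal j)

/-- The windows of length `n` of a sequence of lattice points, moved to the origin. -/
def window (j : ℕ → Fin d → ℤ) (s n : ℕ) : Set (Fin d → ℤ) :=
  (fun i => j (s + i) - j s) '' Set.Iic n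

namespace IsComparable

variable (hB : IsComparable c B)
include hB

lemma apply_self_nonneg (x : Fin d → ℝ) : 0 ≤ B x x :=
  nonneg_of_mul_nonneg_right ((sq_nonneg _).trans (hB.sq_norm_le x))
    (zero_lt_one.trans_le hB.one_le)

/-- Polarization: `2 B(j, k - j) = Q(k) - Q(j) - Q(k - j)`. -/
lemma abs_apply_sub_le {ρ : ℝ} (hρ : 1 ≤ ρ) {j k : Fin d → ℤ} (hjk : ‖k - j‖ ≤ ρ)
    (hQ : |latticeForm B k - latticeForm B j| ≤ ρ) :
    |B (toReal j) (toReal (k - j))| ≤ c * ρ ^ 2 := by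
  have hpolar : 2 * B (toReal j) (toReal (k - j)) =
      latticeForm B k - latticeForm B j - latticeForm B (k - j) := by
    simp only [latticeForm, map_sub, LinearMap.sub_apply, hB.isSymm.eq (toReal k) (toReal j)]
    ring
  have hnonneg : 0 ≤ latticeForm B (k - j) := hB.apply_self_nonneg _
  have hle : latticeForm B (k - j) ≤ c * ρ ^ 2 := by
    have hc := hB.one_le
    calc latticeForm B (k - j) ≤ c * ‖k - j‖ ^ 2 := hB.le_sq_norm _
      _ ≤ c * ρ ^ 2 := by gcongr
  have hρc : ρ ≤ c * ρ ^ 2 := by nlinarith [hB.one_le]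
  rw [abs_le] at hQ ⊢
  constructor <;> linarith

lemma abs_apply_le_of_mem_window {Γ : ℝ} {L n p s : ℕ} {j : ℕ → Fin d → ℤ}
    (hj : IsClusterChain (latticeForm B) Γ L j) (hΓ : 0 ≤ Γ) (hρ : 1 ≤ n * Γ) (hsp : s ≤ p)
    (hps : p ≤ s + n) (hs : s + n ≤ L) {y : Fin d → ℤ} (hy : y ∈ window j s n) :
    |B (toReal (j p)) (toReal y)| ≤ 2 * c * (n * Γ) ^ 2 := by
  obtain ⟨i, hi, rfl⟩ := hy
  rw [Set.mem_Iic] at hi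
  have hbound (q) (hqs : s ≤ q) (hq : q ≤ s + n) :
      |B (toReal (j p)) (toReal (j q - j p))| ≤ c * (n * Γ) ^ 2 := by
    have ⟨hjq, hQ⟩ := hj.displacement_le_of_le hΓ (hps.trans hs) (hq.trans hs)
      (show p ≤ q + n by omega) (by omega)
    exact hB.abs_apply_sub_le hρ hjq hQ
  have hi' := hbound (s + i) (by omega) (by omega)
  have hs' := hbound s le_rfl (by omega)
  beta_reduce
  rw [← sub_sub_sub_cancel_right (j (s + i)) (j s) (j p), map_sub, map_sub]
  linarith [abs_sub (B (toReal (j p)) (toReal (j (s + i) - j p)))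
    (B (toReal (j p)) (toReal (j s - j p)))]

/-- If every window of a chain spans the same space, then the functionals `B (j p)` are all small
on that space, in particular at `j p - j 0`. -/
lemma exists_norm_sub_le : ∃ C : ℝ, 1 ≤ C ∧ ∀ (Γ : ℝ) (L n : ℕ) (j : ℕ → Fin d → ℤ)
    (G : Submodule ℝ (Fin d → ℝ)), IsClusterChain (latticeForm B) Γ L j → 0 ≤ Γ → 1 ≤ n * Γ →
    n ≤ L → (∀ i ≤ L, toReal (j i - j 0) ∈ G) →
    (∀ s, s + n ≤ L → Submodule.span ℝ (toReal '' window j s n) = G) →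
    ∀ p ≤ L, ‖j p - j 0‖ ≤ C * (n * Γ) ^ (2 * d + 3) := by
  obtain ⟨k, hk, hspan⟩ := exists_abs_le_of_mem_span d
  have hc := hB.one_le
  refine ⟨4 * c ^ 2 * k + 1, le_add_of_nonneg_left (by positivity),
    fun Γ L n j G hj hΓ hρ hnL hjG hwindow p hp => ?_⟩
  set ρ : ℝ := n * Γ
  have hfunctional (q) (hq : q ≤ L) (y) (hy : y ∈ G) :
      |B (toReal (j q)) y| ≤ k * ρ ^ (2 * d + 1) * (2 * c * ρ ^ 2) * ‖y‖ := by
    have hs : min q (L - n) + n ≤ L := by omega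
    refine hspan ρ hρ (window j (min q (L - n)) n) ?_ _ _
      (fun f => hB.abs_apply_le_of_mem_window hj hΓ hρ (min_le_left _ _) (by omega) hs) y
      (by rwa [hwindow _ hs])
    rintro _ ⟨i, hi, rfl⟩
    rw [Set.mem_Iic] at hi
    exact (hj.displacement_le_of_le hΓ (by omega) (by omega) (by omega) (by omega)).1
  set y := j p - j 0 with hy_def
  have hQ : B (toReal y) (toReal y) ≤ 2 * (k * ρ ^ (2 * d + 1) * (2 * c * ρ ^ 2) * ‖y‖) := by
    have hp' := hfunctional p hp _ (hjG p hp)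
    have h0 := hfunctional 0 (Nat.zero_le L) _ (hjG p hp)
    rw [norm_toReal, ← hy_def] at hp' h0
    have hsub : B (toReal y) (toReal y) =
        B (toReal (j p)) (toReal y) - B (toReal (j 0)) (toReal y) := by
      rw [← LinearMap.sub_apply, ← map_sub, ← map_sub]
    linarith [(abs_le.1 hp').2, (abs_le.1 h0).1]
  have hmul : ‖y‖ * ‖y‖ ≤ (4 * c ^ 2 * k * ρ ^ (2 * d + 3)) * ‖y‖ := by
    calc ‖y‖ * ‖y‖ = ‖toReal y‖ ^ 2 := by rw [norm_toReal, sq]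
      _ ≤ c * B (toReal y) (toReal y) := hB.sq_norm_le _
      _ ≤ c * (2 * (k * ρ ^ (2 * d + 1) * (2 * c * ρ ^ 2) * ‖y‖)) := by gcongr
      _ = _ := by ring
  calc ‖y‖ ≤ 4 * c ^ 2 * k * ρ ^ (2 * d + 3) := by
        rcases (norm_nonneg y).eq_or_lt with h0 | h0
        · rw [← h0]; positivity
        · exact le_of_mul_le_mul_right hmul h0
    _ ≤ (4 * c ^ 2 * k + 1) * ρ ^ (2 * d + 3) := by gcongr; exact le_add_of_nonneg_right zero_le_one

end IsComparable

/-- Injective cluster chains moving inside a space of dimension at most `g` have length at most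
`C * Γ ^ b`. -/
def HasChainBound (μ : (Fin d → ℤ) → ℝ) (g : ℕ) (C : ℝ) (b : ℕ) : Prop :=
  ∀ (Γ : ℝ), 1 ≤ Γ → ∀ (L : ℕ) (j : ℕ → Fin d → ℤ), IsClusterChain μ Γ L j →
    Set.InjOn j (Set.Iic L) → ∀ G : Submodule ℝ (Fin d → ℝ), Module.finrank ℝ G ≤ g →
    (∀ i ≤ L, toReal (j i - j 0) ∈ G) → (L : ℝ) ≤ C * Γ ^ b

lemma hasChainBound_zero (μ : (Fin d → ℤ) → ℝ) (C : ℝ) (hC : 0 ≤ C) : HasChainBound μ 0 C 0 := by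
  intro Γ _ L j _ hinj G hG hjG
  have hbot : G = ⊥ := Submodule.finrank_eq_zero.1 (Nat.le_zero.1 hG)
  have hL := hjG L le_rfl
  rw [hbot, Submodule.mem_bot, ← norm_eq_zero, norm_toReal, norm_eq_zero, sub_eq_zero] at hL
  have hL0 : L = 0 := hinj Set.self_mem_Iic (Set.mem_Iic.2 (Nat.zero_le L)) hL
  simpa [hL0] using hC

lemma HasChainBound.span_window_eq {μ : (Fin d → ℤ) → ℝ} {g b L n s : ℕ} {C Γ : ℝ}
    (h : HasChainBound μ g C b) (hΓ : 1 ≤ Γ) {j : ℕ → Fin d → ℤ} (hj : IsClusterChain μ Γ L j)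
    (hinj : Set.InjOn j (Set.Iic L)) {G : Submodule ℝ (Fin d → ℝ)}
    (hG : Module.finrank ℝ G ≤ g + 1) (hjG : ∀ i ≤ L, toReal (j i - j 0) ∈ G)
    (hn : C * Γ ^ b < n) (hs : s + n ≤ L) :
    Submodule.span ℝ (toReal '' window j s n) = G := by
  have hle : Submodule.span ℝ (toReal '' window j s n) ≤ G := by
    rw [Submodule.span_le]
    rintro _ ⟨_, ⟨i, hi, rfl⟩, rfl⟩
    rw [Set.mem_Iic] at hi
    have hmem := G.sub_mem (hjG (s + i) (by omega)) (hjG s (by omega))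
    rwa [← map_sub, sub_sub_sub_cancel_right] at hmem
  refine Submodule.eq_of_le_of_finrank_le hle (hG.trans (Nat.succ_le_of_lt ?_))
  by_contra! hdim
  have hinj' : Set.InjOn (fun i => j (s + i)) (Set.Iic n) := fun i hi i' hi' hii' => by
    rw [Set.mem_Iic] at hi hi'
    exact Nat.add_left_cancel
      (hinj (Set.mem_Iic.2 (by omega)) (Set.mem_Iic.2 (by omega)) hii')
  exact hn.not_ge (h Γ hΓ n _ (hj.shift hs) hinj' _ hdim
    fun i hi => Submodule.subset_span ⟨_, ⟨i, hi, rfl⟩, rfl⟩)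

/-- Either the chain is shorter than the bound for dimension `g`, or all its windows of that length
span the full space; in the second case the chain stays in a ball of polynomial radius. -/
lemma IsComparable.exists_hasChainBound_succ (hB : IsComparable c B) {g b : ℕ} {C : ℝ}
    (hC : 1 ≤ C) (h : HasChainBound (latticeForm B) g C b) :
    ∃ C' : ℝ, 1 ≤ C' ∧ ∃ b' : ℕ, HasChainBound (latticeForm B) (g + 1) C' b' := by
  obtain ⟨D, hD, hdist⟩ := hB.exists_norm_sub_le
  refine ⟨(3 * (D * (2 * C) ^ (2 * d + 3))) ^ (d + 1), ?_, (b + 1) * (2 * d + 3) * (d + 1),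
    fun Γ hΓ L j hj hinj G hG hjG => ?_⟩
  · exact one_le_pow₀ (one_le_mul_of_one_le_of_one_le (by norm_num)
      (one_le_mul_of_one_le_of_one_le hD (one_le_pow₀ (by linarith))))
  set n := ⌊C * Γ ^ b⌋₊ + 1 with hn_def
  set X : ℝ := 2 * C * Γ ^ (b + 1) with hX_def
  have hCΓ : 1 ≤ C * Γ ^ b := one_le_mul_of_one_le_of_one_le hC (one_le_pow₀ hΓ)
  have hn_gt : C * Γ ^ b < n := by
    rw [hn_def]; push_cast; exact Nat.lt_floor_add_one _
  have hρ : 1 ≤ n * Γ := one_le_mul_of_one_le_of_one_le (hCΓ.trans hn_gt.le) hΓ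
  have hnX : n * Γ ≤ X := by
    have hfloor := Nat.floor_le (zero_le_one.trans hCΓ)
    calc n * Γ ≤ (2 * C * Γ ^ b) * Γ := by gcongr; rw [hn_def]; push_cast; linarith
      _ = X := by rw [hX_def]; ring
  have hX : 1 ≤ X := hρ.trans hnX
  have hDX : X ≤ D * X ^ (2 * d + 3) :=
    (le_self_pow₀ hX (by omega)).trans (le_mul_of_one_le_left (by positivity) hD)
  have hL : (L : ℝ) ≤ (3 * (D * X ^ (2 * d + 3))) ^ (d + 1) := by
    rcases lt_or_ge L n with hLn | hnL
    · calc (L : ℝ) ≤ n * Γ := (Nat.cast_le.2 hLn.le).trans (le_mul_of_one_le_right (by simp) hΓ)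
        _ ≤ 3 * (D * X ^ (2 * d + 3)) := by linarith
        _ ≤ _ := le_self_pow₀ (by linarith) (by omega)
    · have hball (p) (hp : p ≤ L) : ‖j p - j 0‖ ≤ D * X ^ (2 * d + 3) :=
        (hdist Γ L n j G hj (by linarith) hρ hnL hjG
          (fun s => h.span_window_eq hΓ hj hinj hG hjG hn_gt) p hp).trans (by gcongr)
      exact (length_le_of_injOn hinj (hX.trans hDX) hball).trans
        (pow_le_pow_right₀ (by linarith) (Nat.le_succ d))
  refine hL.trans_eq ?_
  rw [hX_def, mul_pow (2 * C), ← mul_assoc D, ← mul_assoc 3, mul_pow _ ((Γ ^ (b + 1)) ^ _),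
    ← pow_mul, ← pow_mul, mul_assoc (b + 1)]

theorem IsComparable.exists_hasChainBound (hB : IsComparable c B) (g : ℕ) :
    ∃ C : ℝ, 1 ≤ C ∧ ∃ b : ℕ, HasChainBound (latticeForm B) g C b := by
  induction g with
  | zero => exact ⟨1, le_rfl, 0, hasChainBound_zero _ 1 zero_le_one⟩
  | succ g ih =>
    obtain ⟨C, hC, b, h⟩ := ih
    exact hB.exists_hasChainBound_succ hC h

lemma exists_isComparable {W : Matrix (Fin d) (Fin d) ℝ} (hW : IsUnit W.det) :
    ∃ (c : ℝ) (B : LinearMap.BilinForm ℝ (Fin d → ℝ)), IsComparable c B ∧ latticeForm B = mu W := by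
  set T := LinearMap.toContinuousLinearMap W.toLin'
  set S := LinearMap.toContinuousLinearMap W⁻¹.toLin'
  have hST (x) : S (T x) = x := by
    change W⁻¹.toLin' (W.toLin' x) = x
    rw [Matrix.toLin'_apply, Matrix.toLin'_apply, Matrix.mulVec_mulVec,
      Matrix.nonsing_inv_mul _ hW, Matrix.one_mulVec]
  have hnonneg : 0 ≤ (d : ℝ) * ‖T‖ ^ 2 := by positivity
  refine ⟨1 + ‖S‖ ^ 2 + d * ‖T‖ ^ 2, (dotProductBilin ℝ ℝ).compl₁₂ W.toLin' W.toLin',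
    ⟨⟨fun x y => dotProduct_comm (T x) (T y)⟩, ?_, fun x => ?_, fun x => ?_⟩, ?_⟩
  · linarith [sq_nonneg ‖S‖]
  · have hTx : ‖T x‖ ^ 2 ≤ T x ⬝ᵥ T x := sq_norm_le_dotProduct_self (T x)
    have : 0 ≤ T x ⬝ᵥ T x := (sq_nonneg _).trans hTx
    calc ‖x‖ ^ 2 ≤ (‖S‖ * ‖T x‖) ^ 2 := by
          gcongr
          simpa only [hST] using S.le_opNorm (T x)
      _ = ‖S‖ ^ 2 * ‖T x‖ ^ 2 := mul_pow _ _ _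
      _ ≤ (1 + ‖S‖ ^ 2 + d * ‖T‖ ^ 2) * (T x ⬝ᵥ T x) := by gcongr; linarith
  · calc T x ⬝ᵥ T x ≤ d * ‖T x‖ * ‖T x‖ := by
          simpa using (le_abs_self _).trans (abs_dotProduct_le (T x) (T x))
      _ ≤ d * (‖T‖ * ‖x‖) * (‖T‖ * ‖x‖) := by gcongr <;> exact T.le_opNorm x
      _ = d * ‖T‖ ^ 2 * ‖x‖ ^ 2 := by ring
      _ ≤ (1 + ‖S‖ ^ 2 + d * ‖T‖ ^ 2) * ‖x‖ ^ 2 := by gcongr; linarith [sq_nonneg ‖S‖]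
  · ext j
    change T (toReal j) ⬝ᵥ T (toReal j) = ∑ i, T (toReal j) i ^ 2
    simp only [dotProduct, sq]

end Forms

section ClusterGraph

variable {ι : Type*} [SeminormedAddCommGroup ι] {G : SimpleGraph ι} {M : ℝ}

/-- The graph whose components are the clusters: it joins points which are close and have close
values of `μ`. -/
def clusterGraph (μ : ι → ℝ) (Γ : ℝ) : SimpleGraph ι where
  Adj j k := j ≠ k ∧ ‖j - k‖ ≤ Γ ∧ |μ j - μ k| ≤ Γ
  symm := ⟨fun j k h => by rwa [ne_comm, norm_sub_rev, abs_sub_comm]⟩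
  loopless := ⟨fun _ h => h.1 rfl⟩

theorem IsComparable.exists_norm_sub_le_of_reachable {d : ℕ} {c : ℝ}
    {B : LinearMap.BilinForm ℝ (Fin d → ℝ)} (hB : IsComparable c B) :
    ∃ C : ℝ, 1 ≤ C ∧ ∃ b : ℕ, ∀ Γ : ℝ, 1 ≤ Γ → ∀ j k,
      (clusterGraph (latticeForm B) Γ).Reachable j k → ‖j - k‖ ≤ C * Γ ^ b := by
  obtain ⟨C, hC, b, h⟩ := hB.exists_hasChainBound d
  refine ⟨C, hC, b + 1, fun Γ hΓ j k hjk => ?_⟩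
  obtain ⟨p, hp⟩ := hjk.exists_isPath
  have hchain : IsClusterChain (latticeForm B) Γ p.length p.getVert := fun i hi => by
    rw [norm_sub_rev, abs_sub_comm]
    exact (p.adj_getVert_succ hi).2
  have hlength := h Γ hΓ p.length p.getVert hchain hp.getVert_injOn ⊤ (by simp) fun _ _ => trivial
  have hdist := (hchain.displacement_le 0 p.length (by omega)).1
  rw [zero_add, p.getVert_length, p.getVert_zero] at hdist
  calc ‖j - k‖ = ‖k - j‖ := norm_sub_rev j k
    _ ≤ p.length * Γ := hdist
    _ ≤ (C * Γ ^ b) * Γ := by gcongr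
    _ = C * Γ ^ (b + 1) := by ring

/-- The supremum of `max (1 + ‖k‖) M` over the component of `j`; the floor `M`, of the size of the
clusters, makes it a moderate weight. -/
noncomputable def clusterSup (G : SimpleGraph ι) (M : ℝ) (j : ι) : ℝ :=
  sSup ((fun k => max (1 + ‖k‖) M) '' {k | G.Reachable j k})

lemma clusterSup_eq {j k : ι} (h : G.Reachable j k) : clusterSup G M j = clusterSup G M k := by
  have hset : {i | G.Reachable j i} = {i | G.Reachable k i} :=
    Set.ext fun _ => ⟨h.symm.trans, h.trans⟩
  rw [clusterSup, clusterSup, hset]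

section Bounds

variable (hG : ∀ j k, G.Reachable j k → ‖j - k‖ ≤ M)
include hG

lemma mem_upperBounds_clusterSup (j : ι) :
    2 * max (1 + ‖j‖) M ∈ upperBounds ((fun k => max (1 + ‖k‖) M) '' {k | G.Reachable j k}) := by
  rintro _ ⟨k, hk, rfl⟩
  have hjk := norm_le_norm_add_norm_sub j k
  have hj := le_max_left (1 + ‖j‖) M
  have hM := le_max_right (1 + ‖j‖) M
  exact max_le (by linarith [hG j k hk]) (by linarith [norm_nonneg j])

lemma clusterSup_le (j : ι) : clusterSup G M j ≤ 2 * max (1 + ‖j‖) M :=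
  csSup_le ⟨_, j, SimpleGraph.Reachable.refl j, rfl⟩ (mem_upperBounds_clusterSup hG j)

lemma max_le_clusterSup (j : ι) : max (1 + ‖j‖) M ≤ clusterSup G M j :=
  le_csSup ⟨_, mem_upperBounds_clusterSup hG j⟩ ⟨j, SimpleGraph.Reachable.refl j, rfl⟩

lemma one_add_norm_le_clusterSup (j : ι) : 1 + ‖j‖ ≤ clusterSup G M j :=
  (le_max_left _ _).trans (max_le_clusterSup hG j)

lemma clusterSup_pos (j : ι) : 0 < clusterSup G M j :=
  (by positivity : 0 < 1 + ‖j‖).trans_le (one_add_norm_le_clusterSup hG j)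

lemma clusterSup_le_mul (j k : ι) :
    clusterSup G M j ≤ 2 * clusterSup G M k * (1 + ‖j - k‖) := by
  have hk := one_add_norm_le_clusterSup hG k
  have hM : M ≤ clusterSup G M k := (le_max_right _ _).trans (max_le_clusterSup hG k)
  have hjk : ‖j‖ ≤ ‖k‖ + ‖j - k‖ := norm_le_norm_add_norm_sub' j k
  have hmax : max (1 + ‖j‖) M ≤ clusterSup G M k * (1 + ‖j - k‖) :=
    max_le (by nlinarith [norm_nonneg k, norm_nonneg (j - k)])
      (by nlinarith [norm_nonneg k, norm_nonneg (j - k)])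
  linarith [clusterSup_le hG j]

end Bounds

theorem exists_isClusterWeight {μ : ι → ℝ} {C : ℝ} (hC : 1 ≤ C) {b : ℕ}
    (h : ∀ Γ : ℝ, 1 ≤ Γ → ∀ j k, (clusterGraph μ Γ).Reachable j k → ‖j - k‖ ≤ C * Γ ^ b)
    {r : ℝ} (hr : 0 ≤ r) :
    ∃ w : Param → ι → ℝ, IsClusterWeight μ w ∧ ∀ Γ j, (1 + ‖j‖) ^ r ≤ w Γ j ∧
      w Γ j ≤ (2 * C * (Γ : ℝ) ^ b) ^ r * (1 + ‖j‖) ^ r := by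
  let v (Γ : Param) : ι → ℝ := clusterSup (clusterGraph μ Γ) (C * (Γ : ℝ) ^ b)
  have hG (Γ : Param) := h Γ Γ.one_le
  have hv (Γ j) : 0 < v Γ j := clusterSup_pos (hG Γ) j
  have hM (Γ : Param) : 1 ≤ C * (Γ : ℝ) ^ b :=
    one_le_mul_of_one_le_of_one_le hC (one_le_pow₀ Γ.one_le)
  refine ⟨fun Γ j => v Γ j ^ r, ⟨⟨fun Γ j => Real.rpow_pos_of_pos (hv Γ j) r, 2 ^ r,
    by positivity, ⌈r⌉₊, fun Γ j k => ?_⟩, fun Γ j k hjk hμ => ?_⟩, fun Γ j => ⟨?_, ?_⟩⟩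
  · have hk := (hv Γ k).le
    calc v Γ j ^ r ≤ (2 * v Γ k * (1 + ‖j - k‖)) ^ r :=
          Real.rpow_le_rpow (hv Γ j).le (clusterSup_le_mul (hG Γ) j k) hr
      _ = 2 ^ r * v Γ k ^ r * (1 + ‖j - k‖) ^ r := by
          rw [Real.mul_rpow (by positivity) (by positivity), Real.mul_rpow (by norm_num) hk]
      _ ≤ 2 ^ r * v Γ k ^ r * (1 + ‖j - k‖) ^ ⌈r⌉₊ := by
          gcongr
          rw [← Real.rpow_natCast]
          exact Real.rpow_le_rpow_of_exponent_le (by simp) (Nat.le_ceil r)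
  · have hreach : (clusterGraph μ Γ).Reachable j k := by
      by_cases hne : j = k
      · rw [hne]
      · exact SimpleGraph.Adj.reachable ⟨hne, hjk, hμ⟩
    exact congrArg (· ^ r) (clusterSup_eq hreach)
  · exact Real.rpow_le_rpow (by positivity) (one_add_norm_le_clusterSup (hG Γ) j) hr
  · rw [← Real.mul_rpow (by linarith [hM Γ]) (by positivity)]
    refine Real.rpow_le_rpow (hv Γ j).le ((clusterSup_le (hG Γ) j).trans ?_) hr
    have hmax : max (1 + ‖j‖) (C * (Γ : ℝ) ^ b) ≤ C * (Γ : ℝ) ^ b * (1 + ‖j‖) :=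
      max_le (le_mul_of_one_le_left (by positivity) (hM Γ))
        (le_mul_of_one_le_right (by linarith [hM Γ]) (by simp))
    linarith

end ClusterGraph

/-! ### Weighted norms -/

section WeightMul

variable {ι : Type*}

/-- The sequence `φ` multiplied by the weight `w`. -/
noncomputable def weightMul (w : ι → ℝ) (φ : ι → ℂ) (j : ι) : ℂ := w j * φ j

lemma SquareSummable.of_norm_le {u v : ι → ℂ} {B : ℝ} (hv : SquareSummable v)
    (huv : ∀ j, ‖u j‖ ≤ B * ‖v j‖) : SquareSummable u :=
  Summable.of_nonneg_of_le (fun _ => sq_nonneg _)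
    (fun j => (pow_le_pow_left₀ (norm_nonneg _) (huv j) 2).trans_eq (mul_pow _ _ _))
    (hv.mul_left (B ^ 2))

lemma sqrt_sqNorm_le_of_norm_le {u v : ι → ℂ} {B : ℝ} (hB : 0 ≤ B) (hv : SquareSummable v)
    (huv : ∀ j, ‖u j‖ ≤ B * ‖v j‖) : √(sqNorm u) ≤ B * √(sqNorm v) := by
  rw [Real.sqrt_le_left (by positivity), mul_pow, Real.sq_sqrt (sqNorm_nonneg v), sqNorm, sqNorm,
    ← tsum_mul_left]
  refine (hv.of_norm_le huv).tsum_le_tsum (fun j => ?_) (hv.mul_left _)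
  exact (pow_le_pow_left₀ (norm_nonneg _) (huv j) 2).trans_eq (mul_pow _ _ _)

lemma norm_weightMul_of_nonneg {w : ι → ℝ} {j : ι} (hw : 0 ≤ w j) (φ : ι → ℂ) :
    ‖weightMul w φ j‖ = w j * ‖φ j‖ := by
  rw [weightMul, norm_mul, Complex.norm_real, Real.norm_of_nonneg hw]

lemma norm_weightMul_le {v w : ι → ℝ} {B : ℝ} (hv : ∀ j, 0 ≤ v j) (hw : ∀ j, 0 ≤ w j)
    (hwv : ∀ j, w j ≤ B * v j) (φ : ι → ℂ) (j : ι) :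
    ‖weightMul w φ j‖ ≤ B * ‖weightMul v φ j‖ := by
  rw [norm_weightMul_of_nonneg (hv j), norm_weightMul_of_nonneg (hw j), ← mul_assoc]
  gcongr
  exact hwv j

lemma sqNorm_le_two_mul_add {u v : ι → ℂ} (hu : SquareSummable u) (hv : SquareSummable v) :
    sqNorm u ≤ 2 * (sqNorm (u - v) + sqNorm v) := by
  have hpt (x y : ℂ) : ‖x + y‖ ^ 2 ≤ 2 * (‖x‖ ^ 2 + ‖y‖ ^ 2) :=
    (pow_le_pow_left₀ (norm_nonneg _) (norm_add_le x y) 2).trans (add_sq_le ..)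
  have huv : Summable fun j => ‖(u - v) j‖ ^ 2 :=
    Summable.of_nonneg_of_le (fun _ => sq_nonneg _)
      (fun j => by simpa only [Pi.sub_apply, sub_eq_add_neg, norm_neg] using hpt (u j) (-v j))
      ((hu.add hv).mul_left 2)
  rw [sqNorm, sqNorm, sqNorm, ← huv.tsum_add hv, ← tsum_mul_left]
  refine hu.tsum_le_tsum (fun j => ?_) ((huv.add hv).mul_left 2)
  simpa only [Pi.sub_apply, sub_add_cancel] using hpt ((u - v) j) (v j)

section Conjugation

variable [SeminormedAddCommGroup ι] [HasPolynomialGrowth ι] {μ : ι → ℝ} {w : Param → ι → ℝ}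
  {V : SymbolRing ι}

lemma IsSchrodingerSolution.weightMul (hw : IsModerateWeight w) {Γ : Param} {ψ : ℝ → ι → ℂ}
    (hψ : IsSchrodingerSolution μ (V.entry Γ) ψ) :
    IsSchrodingerSolution μ ((hw.conj V).entry Γ) fun t => weightMul (w Γ) (ψ t) := by
  intro j t
  have hsum : mulVec ((hw.conj V).entry Γ t) (SobolevGrowth.weightMul (w Γ) (ψ t)) j
      = w Γ j * mulVec (V.entry Γ t) (ψ t) j := by
    rw [mulVec, mulVec, ← tsum_mul_left]
    refine tsum_congr fun k => ?_
    have hk : (w Γ k : ℂ) ≠ 0 := Complex.ofReal_ne_zero.2 (hw.pos Γ k).ne'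
    rw [hw.entry_conj, ratio, Complex.ofReal_div]
    change _ * (w Γ k * ψ t k) = _
    field_simp
  rw [hsum]
  refine ((hψ j t).const_mul (w Γ j : ℂ)).congr_deriv ?_
  change _ = -Complex.I * (μ j * (w Γ j * ψ t j) + _)
  ring

lemma IsModerateWeight.star_entry_conj (hw : IsModerateWeight w)
    (hV : ∀ Γ t j k, V.entry Γ t k j = star (V.entry Γ t j k)) (Γ : Param) (t : ℝ) (j k : ι) :
    (hw.inv.conj V).entry Γ t k j = star ((hw.conj V).entry Γ t j k) := by
  rw [hw.inv.entry_conj, hw.entry_conj, ratio_inv, hV Γ t j k, star_mul', ratio, Complex.star_def,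
    Complex.conj_ofReal]

theorem IsClusterWeight.exists_sqNorm_weightMul_le (hw : IsClusterWeight μ w)
    (hV : ∀ Γ t j k, V.entry Γ t k j = star (V.entry Γ t j k)) (K : ℕ) :
    ∃ C : ℝ, 1 ≤ C ∧ ∀ (Γ : Param) (T : ℝ), C ≤ Γ → C * T ≤ (Γ : ℝ) ^ K →
      ∀ ψ : ℝ → ι → ℂ, (∀ t, SquareSummable (weightMul (w Γ) (ψ t))) →
      IsSchrodingerSolution μ (V.entry Γ) ψ →
      BddAbove ((fun t => sqNorm (weightMul (w Γ) (ψ t))) '' Set.Icc (-T) T) →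
      ∀ t ∈ Set.Icc (-T) T,
        sqNorm (weightMul (w Γ) (ψ t)) ≤ 6 * sqNorm (weightMul (w Γ) (ψ 0)) := by
  obtain ⟨A, A', R, hA, hR, hH, hA'⟩ := hw.exists_energySymbol V K
  obtain ⟨C, hC, h⟩ := exists_sqNorm_le hA hR hH hA'
    (hw.toIsModerateWeight.star_entry_conj hV)
  exact ⟨C, hC, fun Γ T hΓ hT ψ hs hψ => h Γ T hΓ hT _ hs (hψ.weightMul _)⟩

end Conjugation

end WeightMul

/-! ### Symbols of smooth potentials -/

section Potential

variable {ι : Type*} [SeminormedAddCommGroup ι] {V : ℝ → ι → ι → ℂ}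

lemma symbolClass_iteratedDeriv (hsmooth : ∀ j k, ContDiff ℝ (⊤ : ℕ∞) fun t => V t j k)
    (hdecay : ∀ l N : ℕ, ∃ C : ℝ, 0 ≤ C ∧ ∀ t j k,
      ‖iteratedDeriv l (fun s => V s j k) t‖ ≤ C * ((1 + ‖j - k‖) ^ N)⁻¹) (l n : ℕ) :
    SymbolClass 0 l fun _ t j k => iteratedDeriv n (fun s => V s j k) t := by
  have hrapid (n : ℕ) : RapidDecay 0 fun _ t j k => iteratedDeriv n (fun s => V s j k) t := by
    simpa only [RapidDecay, pow_zero, inv_one, mul_one, forall_const] using hdecay n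
  induction l generalizing n with
  | zero => exact hrapid n
  | succ l ih =>
    refine ⟨hrapid n, _, fun Γ j k t => ?_, ih (n + 1)⟩
    rw [iteratedDeriv_succ]
    exact ((hsmooth j k).differentiable_iteratedDeriv n
      (by exact_mod_cast WithTop.coe_lt_top n) t).hasDerivAt

lemma exists_symbol_entry_eq (hsmooth : ∀ j k, ContDiff ℝ (⊤ : ℕ∞) fun t => V t j k)
    (hdecay : ∀ l N : ℕ, ∃ C : ℝ, 0 ≤ C ∧ ∀ t j k,
      ‖iteratedDeriv l (fun s => V s j k) t‖ ≤ C * ((1 + ‖j - k‖) ^ N)⁻¹) :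
    ∃ S : SymbolRing ι, ∀ Γ, S.entry Γ = V :=
  ⟨⟨fun _ => V, fun l => by
    simpa only [iteratedDeriv_zero] using symbolClass_iteratedDeriv hsmooth hdecay l 0⟩,
    fun _ => rfl⟩

end Potential

/-! ### Sobolev norms -/

section Sobolev

variable {d : ℕ} {r : ℝ}

lemma znormSq_eq_dotProduct (j : Fin d → ℤ) : znormSq j = toReal j ⬝ᵥ toReal j :=
  Finset.sum_congr rfl fun i _ => sq (j i : ℝ)

lemma sq_norm_le_znormSq (j : Fin d → ℤ) : ‖j‖ ^ 2 ≤ znormSq j := by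
  rw [znormSq_eq_dotProduct, ← norm_toReal]
  exact sq_norm_le_dotProduct_self _

lemma norm_le_sqrt_znormSq (j : Fin d → ℤ) : ‖j‖ ≤ √(znormSq j) :=
  Real.le_sqrt_of_sq_le (sq_norm_le_znormSq j)

lemma znormSq_nonneg (j : Fin d → ℤ) : 0 ≤ znormSq j :=
  (sq_nonneg _).trans (sq_norm_le_znormSq j)

lemma znormSq_le_mul_sq_norm (j : Fin d → ℤ) : znormSq j ≤ d * ‖j‖ ^ 2 := by
  have h := (le_abs_self _).trans (abs_dotProduct_le (toReal j) (toReal j))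
  rwa [← znormSq_eq_dotProduct, norm_toReal, Fintype.card_fin, mul_assoc, ← sq] at h

/-- The weight `(1 + |j|²)^(r/2)` of the Sobolev norm of exponent `r`. -/
noncomputable def sobolevWeight (r : ℝ) (j : Fin d → ℤ) : ℝ := √(1 + znormSq j) ^ r

lemma sobolevWeight_nonneg (r : ℝ) (j : Fin d → ℤ) : 0 ≤ sobolevWeight r j := by
  unfold sobolevWeight; positivity

lemma sq_norm_weightMul_sobolevWeight (r : ℝ) (φ : (Fin d → ℤ) → ℂ) (j : Fin d → ℤ) :
    ‖weightMul (sobolevWeight r) φ j‖ ^ 2 = (1 + znormSq j) ^ r * ‖φ j‖ ^ 2 := by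
  have hj : 0 ≤ 1 + znormSq j := by linarith [znormSq_nonneg j]
  rw [weightMul, norm_mul, Complex.norm_real, Real.norm_of_nonneg (sobolevWeight_nonneg r j),
    mul_pow, sobolevWeight, Real.rpow_pow_comm (Real.sqrt_nonneg _), Real.sq_sqrt hj]

lemma sobNorm_eq_sqrt_sqNorm (r : ℝ) (φ : (Fin d → ℤ) → ℂ) :
    sobNorm r φ = √(sqNorm (weightMul (sobolevWeight r) φ)) := by
  simp only [sobNorm, sqNorm, sq_norm_weightMul_sobolevWeight]

lemma squareSummable_weightMul_sobolevWeight {φ : (Fin d → ℤ) → ℂ} :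
    SquareSummable (weightMul (sobolevWeight r) φ) ↔
      Summable fun j => (1 + znormSq j) ^ r * ‖φ j‖ ^ 2 := by
  simp only [SquareSummable, sq_norm_weightMul_sobolevWeight]

lemma sobolevWeight_le (hr : 0 ≤ r) (j : Fin d → ℤ) :
    sobolevWeight r j ≤ (d + 1) ^ r * (1 + ‖j‖) ^ r := by
  rw [← Real.mul_rpow (by positivity) (by positivity)]
  refine Real.rpow_le_rpow (Real.sqrt_nonneg _) (Real.sqrt_le_iff.2 ⟨by positivity, ?_⟩) hr
  have hd : (0 : ℝ) ≤ d := Nat.cast_nonneg d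
  have hj := norm_nonneg j
  calc 1 + znormSq j ≤ 1 + d * ‖j‖ ^ 2 := by gcongr; exact znormSq_le_mul_sq_norm j
    _ ≤ (d + 1) * (1 + ‖j‖) ^ 2 := by nlinarith [mul_nonneg hd hj]
    _ ≤ (d + 1) ^ 2 * (1 + ‖j‖) ^ 2 := by
        gcongr
        exact le_self_pow₀ (by linarith) two_ne_zero
    _ = ((d + 1) * (1 + ‖j‖)) ^ 2 := (mul_pow _ _ _).symm

lemma rpow_one_add_norm_le (hr : 0 ≤ r) (j : Fin d → ℤ) :
    (1 + ‖j‖) ^ r ≤ 2 ^ r * sobolevWeight r j := by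
  rw [sobolevWeight, ← Real.mul_rpow zero_le_two (Real.sqrt_nonneg _)]
  refine Real.rpow_le_rpow (by positivity) ?_ hr
  have hz := znormSq_nonneg j
  have h₁ : 1 ≤ √(1 + znormSq j) := Real.one_le_sqrt.2 (by linarith)
  have h₂ : ‖j‖ ≤ √(1 + znormSq j) :=
    (norm_le_sqrt_znormSq j).trans (Real.sqrt_le_sqrt (by linarith))
  linarith

lemma bddAbove_sobNorm {ψ : ℝ → (Fin d → ℤ) → ℂ}
    (hs : ∀ t, Summable fun j => (1 + znormSq j) ^ r * ‖ψ t j‖ ^ 2)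
    (hc : ∀ t₀ η : ℝ, 0 < η → ∃ δ : ℝ, 0 < δ ∧ ∀ t, |t - t₀| < δ →
      sobNorm r (fun j => ψ t j - ψ t₀ j) < η) (T : ℝ) :
    BddAbove ((fun t => sobNorm r (ψ t)) '' Set.Icc (-T) T) := by
  refine isCompact_Icc.induction_on (p := fun S => BddAbove ((fun t => sobNorm r (ψ t)) '' S))
    (by simp) (fun S S' hSS' h => h.mono (Set.image_mono hSS'))
    (fun S S' h h' => by simpa only [Set.image_union] using h.union h') fun t₀ _ => ?_
  obtain ⟨δ, hδ, hclose⟩ := hc t₀ 1 one_pos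
  refine ⟨Metric.ball t₀ δ, mem_nhdsWithin_of_mem_nhds (Metric.ball_mem_nhds t₀ hδ),
    √(2 * (1 + sqNorm (weightMul (sobolevWeight r) (ψ t₀)))), ?_⟩
  rintro _ ⟨t, ht, rfl⟩
  have hs' (t) := squareSummable_weightMul_sobolevWeight.2 (hs t)
  have hsub : weightMul (sobolevWeight r) (fun j => ψ t j - ψ t₀ j)
      = weightMul (sobolevWeight r) (ψ t) - weightMul (sobolevWeight r) (ψ t₀) :=
    funext fun j => mul_sub _ _ _
  have hone := hclose t ht
  rw [sobNorm_eq_sqrt_sqNorm, hsub, Real.sqrt_lt' one_pos, one_pow] at hone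
  simp only [sobNorm_eq_sqrt_sqNorm]
  refine Real.sqrt_le_sqrt ((sqNorm_le_two_mul_add (hs' t) (hs' t₀)).trans ?_)
  gcongr

/-! ### The choice of the large parameter -/

lemma exists_param_le {r ε : ℝ} (hr : 0 ≤ r) (hε : 0 < ε) (b : ℕ) :
    ∃ K : ℕ, ∀ C T : ℝ, 1 ≤ C → 0 ≤ T → ∃ Γ : Param, C ≤ Γ ∧ C * T ≤ (Γ : ℝ) ^ K ∧
      ((Γ : ℝ) ^ b) ^ r ≤ (C ^ b) ^ r * (1 + T) ^ ε := by
  obtain ⟨K, hK⟩ := exists_nat_gt (b * r / ε)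
  have hK₀ : (0 : ℝ) < K := lt_of_le_of_lt (by positivity) hK
  have hK₁ : K ≠ 0 := by exact_mod_cast hK₀.ne'
  refine ⟨K, fun C T hC hT => ?_⟩
  have hT₀ : 0 ≤ 1 + T := by positivity
  have hC₀ : 0 ≤ C := by positivity
  have hΓ : C ≤ C * (1 + T) ^ (K : ℝ)⁻¹ :=
    le_mul_of_one_le_right hC₀ (Real.one_le_rpow (by linarith) (by positivity))
  refine ⟨⟨C * (1 + T) ^ (K : ℝ)⁻¹, hC.trans hΓ⟩, hΓ, ?_, ?_⟩
  · rw [mul_pow, Real.rpow_inv_natCast_pow hT₀ hK₁]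
    gcongr
    · exact le_self_pow₀ hC hK₁
    · linarith
  · rw [mul_pow, Real.mul_rpow (by positivity) (by positivity), ← Real.rpow_mul_natCast hT₀,
      ← Real.rpow_mul hT₀]
    gcongr
    · linarith
    · rw [div_lt_iff₀ hε] at hK
      rw [mul_assoc, inv_mul_le_iff₀ hK₀]
      exact hK.le

lemma exists_isClusterWeight_mu {W : Matrix (Fin d) (Fin d) ℝ} (hW : IsUnit W.det)
    (hr : 0 ≤ r) :
    ∃ w : Param → (Fin d → ℤ) → ℝ, IsClusterWeight (mu W) w ∧ ∃ b : ℕ, ∃ A B : ℝ, 0 < A ∧ 0 < B ∧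
      ∀ Γ j, sobolevWeight r j ≤ A * w Γ j ∧
        w Γ j ≤ B * ((Γ : ℝ) ^ b) ^ r * sobolevWeight r j := by
  obtain ⟨c, B, hB, hBW⟩ := exists_isComparable hW
  obtain ⟨M, hM, b, hcluster⟩ := hB.exists_norm_sub_le_of_reachable
  rw [hBW] at hcluster
  obtain ⟨w, hw, hbound⟩ := exists_isClusterWeight hM hcluster hr
  refine ⟨w, hw, b, (d + 1) ^ r, (2 * M) ^ r * 2 ^ r, by positivity, by positivity,
    fun Γ j => ⟨(sobolevWeight_le hr j).trans ?_, (hbound Γ j).2.trans ?_⟩⟩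
  · gcongr
    exact (hbound Γ j).1
  · have hΓ := Γ.pos
    calc (2 * M * (Γ : ℝ) ^ b) ^ r * (1 + ‖j‖) ^ r
        ≤ (2 * M * (Γ : ℝ) ^ b) ^ r * (2 ^ r * sobolevWeight r j) := by
          gcongr
          exact rpow_one_add_norm_le hr j
      _ = _ := by
          rw [Real.mul_rpow (by positivity) (by positivity)]
          ring

theorem exists_sobNorm_le {W : Matrix (Fin d) (Fin d) ℝ} (hW : IsUnit W.det) (hr : 0 ≤ r)
    {V : SymbolRing (Fin d → ℤ)} (hV : ∀ Γ t j k, V.entry Γ t k j = star (V.entry Γ t j k)) :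
    ∃ b : ℕ, ∀ K : ℕ, ∃ C : ℝ, 1 ≤ C ∧ ∃ C' : ℝ, 0 < C' ∧
      ∀ (Γ : Param) (T : ℝ), C ≤ Γ → C * T ≤ (Γ : ℝ) ^ K → ∀ ψ : ℝ → (Fin d → ℤ) → ℂ,
      (∀ t, SquareSummable (weightMul (sobolevWeight r) (ψ t))) →
      IsSchrodingerSolution (mu W) (V.entry Γ) ψ →
      BddAbove ((fun t => sobNorm r (ψ t)) '' Set.Icc (-T) T) →
      ∀ t ∈ Set.Icc (-T) T, sobNorm r (ψ t) ≤ C' * ((Γ : ℝ) ^ b) ^ r * sobNorm r (ψ 0) := by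
  obtain ⟨w, hw, b, A, B, hA, hB, hbound⟩ := exists_isClusterWeight_mu hW hr
  refine ⟨b, fun K => ?_⟩
  obtain ⟨C, hC, henergy⟩ := hw.exists_sqNorm_weightMul_le hV K
  refine ⟨C, hC, A * √6 * B, by positivity, fun Γ T hΓ hT ψ hs hψ hbdd t ht => ?_⟩
  have hΓ₀ := Γ.pos
  have hle (s) := norm_weightMul_le (fun j => (hw.pos Γ j).le) (sobolevWeight_nonneg r)
    (fun j => (hbound Γ j).1) (ψ s)
  have hge (s) := norm_weightMul_le (sobolevWeight_nonneg r) (fun j => (hw.pos Γ j).le)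
    (fun j => (hbound Γ j).2) (ψ s)
  have hsw (s) : SquareSummable (weightMul (w Γ) (ψ s)) := (hs s).of_norm_le (hge s)
  have hupper (s) : √(sqNorm (weightMul (w Γ) (ψ s))) ≤ B * ((Γ : ℝ) ^ b) ^ r * sobNorm r (ψ s) :=
    (sqrt_sqNorm_le_of_norm_le (by positivity) (hs s) (hge s)).trans_eq
      (by rw [sobNorm_eq_sqrt_sqNorm])
  have hbddw : BddAbove ((fun s => sqNorm (weightMul (w Γ) (ψ s))) '' Set.Icc (-T) T) := by
    obtain ⟨Y, hY⟩ := hbdd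
    refine ⟨(B * ((Γ : ℝ) ^ b) ^ r * Y) ^ 2, ?_⟩
    rintro _ ⟨s, hsT, rfl⟩
    refine (Real.sqrt_le_iff.1 ((hupper s).trans ?_)).2
    gcongr
    exact hY ⟨s, hsT, rfl⟩
  calc sobNorm r (ψ t) ≤ A * √(sqNorm (weightMul (w Γ) (ψ t))) := by
        rw [sobNorm_eq_sqrt_sqNorm]
        exact sqrt_sqNorm_le_of_norm_le hA.le (hsw t) (hle t)
    _ ≤ A * √(6 * sqNorm (weightMul (w Γ) (ψ 0))) := by
        gcongr
        exact henergy Γ T hΓ hT ψ hsw hψ hbddw t ht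
    _ = A * √6 * √(sqNorm (weightMul (w Γ) (ψ 0))) := by
        rw [Real.sqrt_mul (by norm_num), mul_assoc]
    _ ≤ A * √6 * (B * ((Γ : ℝ) ^ b) ^ r * sobNorm r (ψ 0)) := by
        gcongr
        exact hupper 0
    _ = A * √6 * B * ((Γ : ℝ) ^ b) ^ r * sobNorm r (ψ 0) := by ring

lemma rpow_neg_one_add_sqrt_znormSq_le (N : ℕ) (j : Fin d → ℤ) :
    (1 + √(znormSq j)) ^ (-(N : ℝ)) ≤ ((1 + ‖j‖) ^ N)⁻¹ := by
  rw [Real.rpow_neg (by positivity), Real.rpow_natCast]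
  gcongr
  exact norm_le_sqrt_znormSq j

lemma exists_norm_iteratedDeriv_toeplitz_le {v : ℝ → (Fin d → ℤ) → ℂ}
    (hdecay : ∀ l N : ℕ, ∃ C : ℝ, 0 < C ∧ ∀ (t : ℝ) (k : Fin d → ℤ),
      ‖iteratedDeriv l (fun s => v s k) t‖ ≤ C * (1 + √(znormSq k)) ^ (-(N : ℝ))) (l N : ℕ) :
    ∃ C : ℝ, 0 ≤ C ∧ ∀ (t : ℝ) (j k : Fin d → ℤ),
      ‖iteratedDeriv l (fun s => v s (j - k)) t‖ ≤ C * ((1 + ‖j - k‖) ^ N)⁻¹ := by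
  obtain ⟨C, hC, h⟩ := hdecay l N
  exact ⟨C, hC.le, fun t j k => (h t (j - k)).trans (by
    gcongr
    exact rpow_neg_one_add_sqrt_znormSq_le N (j - k))⟩

end Sobolev

end SobolevGrowth

open SobolevGrowth in
theorem growth_of_sobolev_norms_general {d : ℕ} {W : Matrix (Fin d) (Fin d) ℝ}
    (hW : IsUnit W.det) {V : ℝ → (Fin d → ℤ) → (Fin d → ℤ) → ℂ}
    (hsmooth : ∀ j k, ContDiff ℝ (⊤ : ℕ∞) fun t => V t j k)
    (hherm : ∀ t j k, V t k j = star (V t j k))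
    (hdecay : ∀ l N : ℕ, ∃ C : ℝ, 0 ≤ C ∧ ∀ t j k,
      ‖iteratedDeriv l (fun s => V s j k) t‖ ≤ C * ((1 + ‖j - k‖) ^ N)⁻¹)
    {r ε : ℝ} (hr : 0 ≤ r) (hε : 0 < ε) :
    ∃ C : ℝ, 0 < C ∧ ∀ ψ : ℝ → (Fin d → ℤ) → ℂ,
      (∀ t, Summable fun j => (1 + znormSq j) ^ r * ‖ψ t j‖ ^ 2) →
      (∀ T : ℝ, BddAbove ((fun t => sobNorm r (ψ t)) '' Set.Icc (-T) T)) →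
      IsSchrodingerSolution (mu W) V ψ →
      ∀ t : ℝ, sobNorm r (ψ t) ≤ C * (1 + |t|) ^ ε * sobNorm r (ψ 0) := by
  obtain ⟨S, hS⟩ := exists_symbol_entry_eq hsmooth hdecay
  obtain ⟨b, hb⟩ := exists_sobNorm_le (V := S) hW hr fun Γ t j k => by rw [hS, hherm]
  obtain ⟨K, hK⟩ := exists_param_le hr hε b
  obtain ⟨C, hC, C', hC', hgrowth⟩ := hb K
  refine ⟨C' * (C ^ b) ^ r, by positivity, fun ψ hs hbdd hψ t => ?_⟩
  obtain ⟨Γ, hCΓ, hCT, hΓ⟩ := hK C |t| hC (abs_nonneg t)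
  calc sobNorm r (ψ t) ≤ C' * ((Γ : ℝ) ^ b) ^ r * sobNorm r (ψ 0) :=
        hgrowth Γ |t| hCΓ hCT ψ (fun s => squareSummable_weightMul_sobolevWeight.2 (hs s))
          (by rwa [hS]) (hbdd |t|) t (abs_le.1 le_rfl)
    _ ≤ C' * ((C ^ b) ^ r * (1 + |t|) ^ ε) * sobNorm r (ψ 0) :=
        mul_le_mul_of_nonneg_right (by gcongr) (Real.sqrt_nonneg _)
    _ = C' * (C ^ b) ^ r * (1 + |t|) ^ ε * sobNorm r (ψ 0) := by ring

theorem growth_of_sobolev_norms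
    (d : ℕ) (hd : 1 ≤ d) (W : Matrix (Fin d) (Fin d) ℝ) (hW : IsUnit W.det)
    (Vhat : ℝ → (Fin d → ℤ) → ℂ)
    -- smoothness of the potential in time
    (hsmooth : ∀ k, ContDiff ℝ (⊤ : ℕ∞) (fun t => Vhat t k))
    -- reality of the potential
    (hreal : ∀ t k, Vhat t (-k) = starRingEnd ℂ (Vhat t k))
    -- decay of the Fourier coefficients together with all time derivatives
    (hdecay : ∀ l N : ℕ, ∃ ClN : ℝ, 0 < ClN ∧ ∀ (t : ℝ) (k : Fin d → ℤ),
      ‖iteratedDeriv l (fun s => Vhat s k) t‖ ≤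
        ClN * (1 + Real.sqrt (znormSq k)) ^ (-(N : ℝ)))
    (r ε : ℝ) (hr : 0 < r) (hε : 0 < ε) :
    ∃ C : ℝ, 0 < C ∧
      ∀ ψ : ℝ → (Fin d → ℤ) → ℂ,
        -- ψ(t) ∈ h^r for all t
        (∀ t, Summable (fun j => (1 + znormSq j) ^ r * ‖ψ t j‖ ^ 2)) →
        -- continuity of t ↦ ψ(t) as a map into h^r
        (∀ t₀ : ℝ, ∀ η : ℝ, 0 < η → ∃ δ : ℝ, 0 < δ ∧ ∀ t, |t - t₀| < δ →
          sobNorm r (fun j => ψ t j - ψ t₀ j) < η) →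
        -- the Fourier-side Schrödinger equation i ψ_j' = μ_j ψ_j + Σ_k V̂(t,j-k) ψ_k
        (∀ (j : Fin d → ℤ) (t : ℝ), HasDerivAt (fun s => ψ s j)
          (-Complex.I * ((mu W j : ℝ) * ψ t j + ∑' k : Fin d → ℤ, Vhat t (j - k) * ψ t k)) t) →
        ∀ t : ℝ, sobNorm r (ψ t) ≤ C * (1 + |t|) ^ ε * sobNorm r (ψ 0) := by
  obtain ⟨C, hC, hgrowth⟩ := growth_of_sobolev_norms_general hW (fun j k => hsmooth (j - k))
    (fun t j k => by rw [← neg_sub, hreal]; rfl)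
    (SobolevGrowth.exists_norm_iteratedDeriv_toeplitz_le hdecay) hr.le hε
  exact ⟨C, hC, fun ψ hs hc hψ => hgrowth ψ hs (SobolevGrowth.bddAbove_sobNorm hs hc) hψ⟩
end

section
/- There is a constant C(d) > 0, depending only on d, with the following property. Let B ≥ 1 and λ ∈ [1/2,3/2], suppose |l_i|_∞ ≤ B and |k_i|_∞ ≤ B for all 1 ≤ i ≤ g, and suppose the vectors f_i(λ) := (λ ω̄·l_i, k_i), i = 1,…,g, are linearly independent in ℝ^{1+d}. Then there exist p ∈ ℤ^{binom(d,g)} and a family m = (m_{a⃗})_{a⃗} of vectors m_{a⃗} ∈ ℤ^n, indexed by the (g−1)-element subsets a⃗ of {1,…,d}, with (p, m) ≠ (0,0) and |m_{a⃗}|_∞ ≤ C(d) B^g for all a⃗, such that for every t ∈ ℝ: det A_t = ‖𝔠_g(W) p‖² − t² ‖𝔠_{g−1}(W) ((ω̄·m_{a⃗})_{a⃗})‖². In particular, since the compound matrices 𝔠_g(W) and 𝔠_{g−1}(W) are invertible, the polynomial t ↦ det A_t is not identically zero. -/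
/-- Real cast of an integer vector. -/
def zc {d : ℕ} (j : Fin d → ℤ) : Fin d → ℝ := fun a => (j a : ℝ)

/-- Scalar product ⟨y,y'⟩_W = ⟨Wy, Wy'⟩ induced by W. -/
noncomputable def ipW {d : ℕ} (W : Matrix (Fin d) (Fin d) ℝ) (y y' : Fin d → ℝ) : ℝ :=
  ∑ i, W.mulVec y i * W.mulVec y' i

/-- The g-th compound matrix of `W`: indexed by g-element subsets of `Fin d`, with
entries the corresponding g×g minors of `W`. -/
noncomputable def compound {d : ℕ} (W : Matrix (Fin d) (Fin d) ℝ) (g : ℕ) :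
    Matrix {s : Finset (Fin d) // s.card = g} {s : Finset (Fin d) // s.card = g} ℝ :=
  fun a b =>
    (W.submatrix (fun u : Fin g => a.1.orderEmbOfFin a.2 u)
      (fun v : Fin g => b.1.orderEmbOfFin b.2 v)).det

/-- The g×g matrix A_t with entries (A_t)_i^{i'} = −t²(ω̄·l_i)(ω̄·l_{i'}) + ⟨k_i,k_{i'}⟩_W. -/
noncomputable def Amat {d n g : ℕ} (W : Matrix (Fin d) (Fin d) ℝ) (ω : Fin n → ℝ)
    (l : Fin g → Fin n → ℤ) (k : Fin g → Fin d → ℤ) (t : ℝ) :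
    Matrix (Fin g) (Fin g) ℝ :=
  Matrix.of fun i i' =>
    -(t ^ 2 * (∑ p, ω p * (l i p : ℝ)) * (∑ p, ω p * (l i' p : ℝ))) +
      ipW W (zc (k i)) (zc (k i'))

/-!
Let `K` be the matrix with columns `k_i` and `x` the vector with entries `ω̄·l_i`, so that
`A_t = (W K)ᵀ (W K) - t² x xᵀ`.

An alternating map evaluated at `g` combinations of vectors `v_i` is a sum over `g`-element subsets
with maximal minors as coefficients. For the determinant this is the Cauchy–Binet formula; for the
determinant with its first row frozen to `x` it is the same formula for bordered minors. Hence
`det (M N + x yᵀ)`, expanded in the rank-one term, is the sum of a product of maximal minors and a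
product of bordered minors, while the minors of `W K` are the compound of `W` applied to those of
`K`. So `p` consists of the maximal minors of `K`; the bordered minors are linear in `x`, and
bordering by `(l_i)_q` instead of `ω̄·l_i` yields the integers `(m_a)_q`.

If the columns `(x_j, K_j)` are independent, the matrix `[x; K]` has a left inverse `[y, N]`, and
the expansion of `1 = det (N K + y xᵀ)` shows that some minor is nonzero. The same argument for
`W K` shows that the polynomial does not vanish identically.
-/

open Matrix

section Minors

variable {R S ι : Type*} [CommRing R] [CommRing S] [LinearOrder ι] {g : ℕ}

theorem det_add_vecMulVec (A : Matrix (Fin (g + 1)) (Fin (g + 1)) R) (x y : Fin (g + 1) → R) :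
    (A + vecMulVec x y).det = A.det + ∑ j : Fin (g + 1),
      (-1) ^ (j : ℕ) * y j * (of (vecCons x (A.submatrix id j.succAbove)ᵀ)).det := by
  -- Expanding `[[1, -y], [x, A]]` along its first row gives the right-hand side; clearing its first
  -- column leaves `A + x yᵀ`.
  let bordered (x : Fin (g + 1) → R) (A : Matrix (Fin (g + 1)) (Fin (g + 1)) R) :
      Matrix (Fin (g + 2)) (Fin (g + 2)) R :=
    of (Fin.cons (Fin.cons 1 (-y)) fun i => Fin.cons (x i) (A i))
  have hrow : (bordered 0 (A + vecMulVec x y)).det = (bordered x A).det := by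
    refine det_eq_of_forall_row_eq_smul_add_const (Fin.cons 0 (-x)) 0 rfl fun i j => ?_
    cases i using Fin.cases <;> cases j using Fin.cases <;> simp [bordered, vecMulVec_apply]
  have hcol : (bordered 0 (A + vecMulVec x y)).det = (A + vecMulVec x y).det := by
    rw [det_succ_column_zero, Fin.sum_univ_succ, Finset.sum_eq_zero fun i _ => ?_]
    · exact (add_zero _).trans (by rw [Fin.val_zero, pow_zero, one_mul]; exact one_mul _)
    · exact mul_eq_zero_of_left (mul_zero _) _
  have hminor (j : Fin (g + 1)) : ((bordered x A).submatrix Fin.succ j.succ.succAbove).det =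
      (of (vecCons x (A.submatrix id j.succAbove)ᵀ)).det := by
    rw [← det_transpose]
    congr 1
    ext i a
    cases i using Fin.cases with
    | zero => rfl
    | succ i => exact congrArg (bordered x A a.succ) (Fin.succ_succAbove_succ j i)
  calc (A + vecMulVec x y).det = (bordered x A).det := hcol.symm.trans hrow
    _ = 1 * A.det + ∑ j : Fin (g + 1), (-1) ^ (j.succ : ℕ) * -y j *
          ((bordered x A).submatrix Fin.succ j.succ.succAbove).det := by
      rw [det_succ_row_zero, Fin.sum_univ_succ, Fin.val_zero, pow_zero, one_mul]
      rfl
    _ = _ := by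
      simp only [hminor, one_mul, Fin.val_succ, pow_succ, mul_neg, mul_one, neg_mul, neg_neg]

/-- The Plücker coordinates of `M`, indexed by sets of rows. They are used both as the coefficients
of the Cauchy–Binet expansion and as the integer vector `p` of the theorem. -/
def maximalMinors (M : Matrix ι (Fin g) R) (s : {s : Finset ι // s.card = g}) : R :=
  (M.submatrix (s.1.orderEmbOfFin s.2) id).det

/-- The maximal minors of the matrix with rows `x, M` that involve the row `x`, indexed by the set
of the other rows. They yield the vectors `m_a` of the theorem. -/
def borderedMinors (x : Fin (g + 1) → R) (M : Matrix ι (Fin (g + 1)) R)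
    (s : {s : Finset ι // s.card = g}) : R :=
  (of (vecCons x (M.submatrix (s.1.orderEmbOfFin s.2) id))).det

theorem maximalMinors_map (f : R →+* S) (M : Matrix ι (Fin g) R) :
    maximalMinors (M.map f) = f ∘ maximalMinors M :=
  funext fun _ => (f.map_det _).symm

theorem borderedMinors_map (f : R →+* S) (x : Fin (g + 1) → R) (M : Matrix ι (Fin (g + 1)) R) :
    borderedMinors (f ∘ x) (M.map f) = f ∘ borderedMinors x M := by
  funext s
  refine .trans (congrArg det ?_) (f.map_det _).symm
  ext i
  cases i using Fin.cases <;> rfl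

theorem borderedMinors_eq_sum (x : Fin (g + 1) → R) (M : Matrix ι (Fin (g + 1)) R)
    (s : {s : Finset ι // s.card = g}) :
    borderedMinors x M s =
      ∑ j : Fin (g + 1), (-1) ^ (j : ℕ) * x j * maximalMinors (M.submatrix id j.succAbove) s :=
  det_succ_row_zero _

theorem borderedMinors_smul (c : R) (x : Fin (g + 1) → R) (M : Matrix ι (Fin (g + 1)) R) :
    borderedMinors (c • x) M = c • borderedMinors x M := by
  ext s
  simp only [borderedMinors_eq_sum, Pi.smul_apply, smul_eq_mul, Finset.mul_sum]
  exact Finset.sum_congr rfl fun _ _ => by ring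

theorem borderedMinors_sum {κ : Type*} [Fintype κ] (x : κ → Fin (g + 1) → R)
    (M : Matrix ι (Fin (g + 1)) R) :
    borderedMinors (∑ q, x q) M = ∑ q, borderedMinors (x q) M := by
  ext s
  simp only [borderedMinors_eq_sum, Finset.sum_apply, Finset.mul_sum, Finset.sum_mul]
  exact Finset.sum_comm

theorem absoluteValue_borderedMinors_le {T : Type*} [Nontrivial R] [CommRing T] [LinearOrder T]
    [IsStrictOrderedRing T] (abv : AbsoluteValue R T) {x : Fin (g + 1) → R}
    {M : Matrix ι (Fin (g + 1)) R} {B : T} (hx : ∀ i, abv (x i) ≤ B) (hM : ∀ a i, abv (M a i) ≤ B)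
    (s : {s : Finset ι // s.card = g}) :
    abv (borderedMinors x M s) ≤ (g + 1).factorial * B ^ (g + 1) := by
  have hentry : ∀ i j, abv (of (vecCons x (M.submatrix (s.1.orderEmbOfFin s.2) id)) i j) ≤ B :=
    Fin.cases hx fun _ => hM _
  have hdet := det_le hentry
  rwa [Fintype.card_fin, nsmul_eq_mul] at hdet

variable [Fintype ι]

theorem alternatingMap_sum_smul {E F : Type*} [AddCommGroup E] [Module R E] [AddCommGroup F]
    [Module R F] (f : E [⋀^Fin g]→ₗ[R] F) (A : Matrix (Fin g) ι R) (v : ι → E) :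
    f (fun i => ∑ j, A i j • v j) =
      ∑ s : {s : Finset ι // s.card = g}, maximalMinors Aᵀ s • f (v ∘ s.1.orderEmbOfFin s.2) := by
  let φ := exteriorPower.alternatingMapLinearEquiv
    (f.compLinearMap (Fintype.linearCombination R v))
  let b : Module.Basis {s : Finset ι // s.card = g} R (⋀[R]^g (ι → R)) :=
    (Pi.basisFun R ι).exteriorPower g
  have hφ (A : Matrix (Fin g) ι R) : φ (exteriorPower.ιMulti R g A) =
      f fun i => ∑ j, A i j • v j :=
    exteriorPower.alternatingMapLinearEquiv_apply_ιMulti _ _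
  rw [← hφ A, ← b.sum_repr (exteriorPower.ιMulti R g A), map_sum]
  refine Finset.sum_congr rfl fun s _ => ?_
  have hrepr : b.repr (exteriorPower.ιMulti R g A) s = maximalMinors Aᵀ s :=
    (exteriorPower.basis_repr_apply R g _ _ s).trans <|
      (exteriorPower.ιMultiDual_apply_ιMulti R g _ s A).trans (det_transpose _).symm
  have hbasis : φ (b s) = f (v ∘ s.1.orderEmbOfFin s.2) := by
    refine (congrArg φ (exteriorPower.basis_apply R g _ s)).trans <| (hφ _).trans ?_
    refine congrArg f (funext fun i => ?_)
    change Fintype.linearCombination R v (Pi.basisFun R ι (s.1.orderEmbOfFin s.2 i)) = _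
    rw [Pi.basisFun_apply, Fintype.linearCombination_apply_single, one_smul, Function.comp_apply]
  rw [map_smul, hrepr, hbasis]

theorem det_mul_eq_sum_minors (M : Matrix (Fin g) ι R) (N : Matrix ι (Fin g) R) :
    (M * N).det = maximalMinors Mᵀ ⬝ᵥ maximalMinors N := by
  have hMN : M * N = fun i => ∑ j, M i j • N j := by ext; simp [mul_apply]
  rw [hMN]
  exact alternatingMap_sum_smul detRowAlternating M N

theorem det_vecCons_mul (x : Fin (g + 1) → R) (M : Matrix (Fin g) ι R)
    (N : Matrix ι (Fin (g + 1)) R) :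
    (of (vecCons x (M * N))).det = maximalMinors Mᵀ ⬝ᵥ borderedMinors x N := by
  have hMN : M * N = fun i => ∑ j, M i j • N j := by ext; simp [mul_apply]
  rw [hMN]
  exact alternatingMap_sum_smul (detRowAlternating.curryLeft x) M N

theorem det_mul_add_vecMulVec (M : Matrix (Fin (g + 1)) ι R) (N : Matrix ι (Fin (g + 1)) R)
    (x y : Fin (g + 1) → R) :
    (M * N + vecMulVec x y).det =
      maximalMinors Mᵀ ⬝ᵥ maximalMinors N + borderedMinors x Mᵀ ⬝ᵥ borderedMinors y N := by
  have hcol (j : Fin (g + 1)) : ((M * N).submatrix id j.succAbove)ᵀ =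
      (N.submatrix id j.succAbove)ᵀ * Mᵀ := by
    ext; simp [mul_apply, mul_comm]
  simp only [det_add_vecMulVec, det_mul_eq_sum_minors, hcol, det_vecCons_mul, transpose_transpose,
    dotProduct, Finset.mul_sum]
  rw [Finset.sum_comm]
  congr! 2 with s
  rw [borderedMinors_eq_sum y, Finset.mul_sum]
  exact Finset.sum_congr rfl fun j _ => by ring

omit [Fintype ι] in
theorem maximalMinors_ne_zero_or_borderedMinors_ne_zero [Finite ι] {K : Type*} [Field K]
    {x : Fin (g + 1) → K} {M : Matrix ι (Fin (g + 1)) K}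
    (h : LinearIndependent K fun j => (x j, M.col j)) :
    maximalMinors M ≠ 0 ∨ borderedMinors x M ≠ 0 := by
  have := Fintype.ofFinite ι
  obtain ⟨G, hG⟩ := LinearMap.exists_leftInverse_of_injective _
    (LinearMap.ker_eq_bot.mpr (linearIndependent_iff_injective_fintypeLinearCombination.mp h))
  let N := (G ∘ₗ LinearMap.inr K K (ι → K)).toMatrix'
  have hone : N * M + vecMulVec (G (1, 0)) x = 1 := by
    refine ext_of_mulVec_single fun j => ?_
    have hGj : G (x j, M.col j) = Pi.single j 1 := by
      simpa [Fintype.linearCombination_apply_single] using DFunLike.congr_fun hG (Pi.single j 1)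
    calc (N * M + vecMulVec (G (1, 0)) x) *ᵥ Pi.single j 1
        = G (0, M.col j) + x j • G (1, 0) := by
          rw [add_mulVec, ← mulVec_mulVec, vecMulVec_mulVec, mulVec_single_one,
            LinearMap.toMatrix'_mulVec]
          simp
      _ = G (x j, M.col j) := by rw [← map_smul, ← map_add]; simp
      _ = 1 *ᵥ Pi.single j 1 := by rw [hGj, one_mulVec]
  by_contra! hzero
  simpa [hone, hzero] using det_mul_add_vecMulVec N M (G (1, 0)) x

end Minors

theorem maximalMinors_mul {d g : ℕ} (W : Matrix (Fin d) (Fin d) ℝ) (N : Matrix (Fin d) (Fin g) ℝ) :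
    maximalMinors (W * N) = compound W g *ᵥ maximalMinors N := by
  ext a
  refine (det_mul_eq_sum_minors (W.submatrix (a.1.orderEmbOfFin a.2) id) N).trans ?_
  exact Finset.sum_congr rfl fun b _ => congrArg (· * _) (det_transpose _)

theorem borderedMinors_mul {d g : ℕ} (W : Matrix (Fin d) (Fin d) ℝ) (x : Fin (g + 1) → ℝ)
    (N : Matrix (Fin d) (Fin (g + 1)) ℝ) :
    borderedMinors x (W * N) = compound W g *ᵥ borderedMinors x N := by
  ext a
  refine (det_vecCons_mul x (W.submatrix (a.1.orderEmbOfFin a.2) id) N).trans ?_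
  exact Finset.sum_congr rfl fun b _ => congrArg (· * _) (det_transpose _)

theorem det_gram_add_smul_vecMulVec {d g : ℕ} (W : Matrix (Fin d) (Fin d) ℝ)
    (K : Matrix (Fin d) (Fin (g + 1)) ℝ) (x : Fin (g + 1) → ℝ) (c : ℝ) :
    ((W * K)ᵀ * (W * K) + vecMulVec (c • x) x).det =
      ∑ a, (compound W (g + 1) *ᵥ maximalMinors K) a ^ 2 +
        c * ∑ a, (compound W g *ᵥ borderedMinors x K) a ^ 2 := by
  rw [det_mul_add_vecMulVec, transpose_transpose, borderedMinors_smul, smul_dotProduct,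
    maximalMinors_mul, borderedMinors_mul]
  simp only [dotProduct, sq, smul_eq_mul]

theorem linearIndependent_prodMk_of_fin_cons {ι R : Type*} [CommSemiring R] {d : ℕ} {x : ι → R}
    {v : ι → Fin d → R} (c : R)
    (h : LinearIndependent R fun i => (Fin.cons (c * x i) (v i) : Fin (d + 1) → R)) :
    LinearIndependent R fun i => (x i, v i) :=
  .of_comp (LinearMap.vecCons (c • LinearMap.fst R R _) (LinearMap.snd R R (Fin d → R))) h

theorem linearIndependent_prodMk_mulVec {ι m R : Type*} [CommRing R] [Fintype m] [DecidableEq m]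
    {W : Matrix m m R} (hW : IsUnit W.det) {x : ι → R} {v : ι → m → R}
    (h : LinearIndependent R fun i => (x i, v i)) :
    LinearIndependent R fun i => (x i, W *ᵥ v i) :=
  h.map_injOn (LinearMap.id.prodMap W.mulVecLin) (Function.Injective.injOn <|
    Function.injective_id.prodMap <| mulVec_injective_of_isUnit <|
      (isUnit_iff_isUnit_det W).mpr hW)

theorem exists_det_gram_sub_ne_zero {d g : ℕ} {W : Matrix (Fin d) (Fin d) ℝ} (hW : IsUnit W.det)
    {K : Matrix (Fin d) (Fin (g + 1)) ℝ} {x : Fin (g + 1) → ℝ}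
    (h : LinearIndependent ℝ fun j => (x j, K.col j)) :
    ∃ t : ℝ, ((W * K)ᵀ * (W * K) + vecMulVec (-t ^ 2 • x) x).det ≠ 0 := by
  by_contra! hdet
  simp only [det_gram_add_smul_vecMulVec, ← maximalMinors_mul, ← borderedMinors_mul] at hdet
  have hmax : ∑ a, maximalMinors (W * K) a ^ 2 = 0 := by simpa using hdet 0
  have hbord : ∑ a, borderedMinors x (W * K) a ^ 2 = 0 := by simpa [hmax] using hdet 1
  have hsq {κ : Type} [Fintype κ] {u : κ → ℝ} (hu : ∑ a, u a ^ 2 = 0) : u = 0 :=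
    dotProduct_self_eq_zero.mp (by simpa only [dotProduct, sq] using hu)
  have hWK := linearIndependent_prodMk_mulVec hW h
  exact (maximalMinors_ne_zero_or_borderedMinors_ne_zero hWK).elim (· (hsq hmax)) (· (hsq hbord))

theorem Amat_eq_gram_add_smul_vecMulVec {d n g : ℕ} (W : Matrix (Fin d) (Fin d) ℝ)
    (ω : Fin n → ℝ) (l : Fin g → Fin n → ℤ) (k : Fin g → Fin d → ℤ) (t : ℝ) :
    Amat W ω l k t =
      (W * (of k)ᵀ.map (Int.castRingHom ℝ))ᵀ * (W * (of k)ᵀ.map (Int.castRingHom ℝ)) +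
        vecMulVec (-t ^ 2 • fun i => ∑ q, ω q * (l i q : ℝ)) fun i => ∑ q, ω q * (l i q : ℝ) := by
  ext i j
  simp only [Amat, ipW, zc, mulVec, dotProduct, of_apply, Int.coe_castRingHom, transpose_mul,
    Matrix.add_apply, mul_apply, transpose_apply, map_apply, mul_comm, vecMulVec_apply,
    Pi.smul_apply, smul_eq_mul]
  ring

theorem borderedMinors_sum_mul_intCast {d n g : ℕ} (ω : Fin n → ℝ) (l : Fin (g + 1) → Fin n → ℤ)
    (M : Matrix (Fin d) (Fin (g + 1)) ℤ) :
    borderedMinors (fun i => ∑ q, ω q * (l i q : ℝ)) (M.map (Int.castRingHom ℝ)) =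
      fun a => ∑ q, ω q * ((borderedMinors (l · q) M a : ℤ) : ℝ) := by
  have hx : (fun i => ∑ q, ω q * (l i q : ℝ)) = ∑ q, ω q • (Int.castRingHom ℝ ∘ (l · q)) := by
    ext; simp
  ext a
  simp only [hx, borderedMinors_sum, borderedMinors_smul, borderedMinors_map, Finset.sum_apply,
    Pi.smul_apply, smul_eq_mul, Function.comp_apply, eq_intCast]

theorem det_Amat_expansion_general {d n g : ℕ} (W : Matrix (Fin d) (Fin d) ℝ) (ω : Fin n → ℝ)
    (l : Fin (g + 1) → Fin n → ℤ) (k : Fin (g + 1) → Fin d → ℤ) {B : ℝ} (lam : ℝ)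
    (hl : ∀ i q, ((|l i q| : ℤ) : ℝ) ≤ B) (hk : ∀ i a, ((|k i a| : ℤ) : ℝ) ≤ B)
    (hli : LinearIndependent ℝ fun i =>
      (Fin.cons (lam * ∑ q, ω q * (l i q : ℝ)) (zc (k i)) : Fin (d + 1) → ℝ)) :
    ∃ (p : {s : Finset (Fin d) // s.card = g + 1} → ℤ)
      (m : {s : Finset (Fin d) // s.card = g} → Fin n → ℤ),
      (p ≠ 0 ∨ m ≠ 0) ∧
      (∀ a q, ((|m a q| : ℤ) : ℝ) ≤ (g + 1).factorial * B ^ (g + 1)) ∧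
      (∀ t, (Amat W ω l k t).det =
        ∑ a, (compound W (g + 1) *ᵥ fun b => (p b : ℝ)) a ^ 2 -
          t ^ 2 * ∑ a, (compound W g *ᵥ fun b => ∑ q, ω q * (m b q : ℝ)) a ^ 2) ∧
      (IsUnit W.det → ¬ ∀ t, (Amat W ω l k t).det = 0) := by
  let p := maximalMinors (of k)ᵀ
  let m a q := borderedMinors (l · q) (of k)ᵀ a
  have hp : maximalMinors ((of k)ᵀ.map (Int.castRingHom ℝ)) = fun b => (p b : ℝ) :=
    maximalMinors_map _ _
  have hm := borderedMinors_sum_mul_intCast ω l (of k)ᵀ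
  have hprod := linearIndependent_prodMk_of_fin_cons lam hli
  refine ⟨p, m, ?_, ?_, fun t => ?_, fun hW hzero => ?_⟩
  · refine (maximalMinors_ne_zero_or_borderedMinors_ne_zero hprod).imp (mt fun h => ?_)
      (mt fun h => ?_)
    · exact hp.trans (funext fun b => by simp [h])
    · exact hm.trans (funext fun a => Finset.sum_eq_zero fun q _ => by
        rw [show borderedMinors (l · q) (of k)ᵀ a = 0 from congrFun₂ h a q]; simp)
  · let absReal := AbsoluteValue.abs.comp (RingHom.injective_int (Int.castRingHom ℝ))
    simp only [Int.cast_abs] at hl hk ⊢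
    exact fun a q => absoluteValue_borderedMinors_le absReal (hl · q) (fun b i => hk i b) a
  · rw [Amat_eq_gram_add_smul_vecMulVec, det_gram_add_smul_vecMulVec, hp, hm, neg_mul,
      ← sub_eq_add_neg]
  · obtain ⟨t, ht⟩ := exists_det_gram_sub_ne_zero hW hprod
    exact ht ((congrArg det (Amat_eq_gram_add_smul_vecMulVec W ω l k t)).symm.trans (hzero t))

theorem det_Amat_expansion
    (d : ℕ) (hd : 1 ≤ d) :
    ∃ C : ℝ, 0 < C ∧
      ∀ (W : Matrix (Fin d) (Fin d) ℝ), IsUnit W.det →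
      ∀ (n : ℕ), 1 ≤ n →
      ∀ (ω : Fin n → ℝ),
      ∀ (gm : ℕ), gm + 1 ≤ d + 1 →
      ∀ (l : Fin (gm + 1) → Fin n → ℤ) (k : Fin (gm + 1) → Fin d → ℤ),
      ∀ (B : ℝ), 1 ≤ B →
      ∀ (lam : ℝ), lam ∈ Set.Icc (1/2 : ℝ) (3/2) →
        (∀ i p, ((|l i p| : ℤ) : ℝ) ≤ B) →
        (∀ i a, ((|k i a| : ℤ) : ℝ) ≤ B) →
        -- the vectors f_i(λ) = (λ ω̄·l_i, k_i) are linearly independent in ℝ^{1+d}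
        LinearIndependent ℝ (fun i : Fin (gm + 1) =>
          (Fin.cons (lam * ∑ p, ω p * (l i p : ℝ)) (zc (k i)) : Fin (d + 1) → ℝ)) →
        ∃ (p : {s : Finset (Fin d) // s.card = gm + 1} → ℤ)
          (mm : {s : Finset (Fin d) // s.card = gm} → Fin n → ℤ),
          (p ≠ 0 ∨ mm ≠ 0) ∧
          (∀ a i, ((|mm a i| : ℤ) : ℝ) ≤ C * B ^ (gm + 1)) ∧
          (∀ t : ℝ, (Amat W ω l k t).det =
            (∑ a : {s : Finset (Fin d) // s.card = gm + 1},
              ((compound W (gm + 1)).mulVec (fun b => ((p b : ℤ) : ℝ)) a) ^ 2) -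
            t ^ 2 * (∑ c : {s : Finset (Fin d) // s.card = gm},
              ((compound W gm).mulVec (fun a => ∑ i, ω i * ((mm a i : ℤ) : ℝ)) c) ^ 2)) ∧
          -- in particular, t ↦ det A_t is not identically zero
          ¬ (∀ t : ℝ, (Amat W ω l k t).det = 0) := by
  refine ⟨(d + 1).factorial, by positivity, ?_⟩
  intro W hW n _ ω gm hgm l k B _ lam _ hl hk hli
  obtain ⟨p, mm, hne, hbound, hexp, hnz⟩ := det_Amat_expansion_general W ω l k lam hl hk hli
  exact ⟨p, mm, hne, fun a i => (hbound a i).trans (by gcongr), hexp, hnz hW⟩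
end

section
/- The set { θ ∈ ℝ : |−(a+θ)² + b + m| ≤ ε } is contained in the union of two intervals I₁, I₂, each of length at most 2ε/√m. (This verifies Hypothesis 2 of the abstract Nash–Moser theorem for the Klein–Gordon eigenvalues D_{ℓ,j}(λ,θ) = −(λω̄·ℓ+θ)² + μ_j + m, taking a = λω̄·ℓ, b = μ_j and ε = N^{−τ₁}.) -/
/-!
Put `M = b + m` and `x = a + θ`. The condition becomes `|M - x ^ 2| ≤ ε`, that is
`√(M - ε) ≤ |x| ≤ √(M + ε)`, and cuts out two mirror-image intervals. When `M < ε` they meet at `0`,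
because `Real.sqrt` vanishes on negative numbers. Rationalizing, their common length is at most
`2 * ε / (√(M - ε) + √(M + ε)) ≤ 2 * ε / √(M + ε)`, and `m ≤ M + ε`.
-/

theorem sqrt_sub_sqrt_le_sub_div_sqrt {x y : ℝ} (hxy : x ≤ y) : √y - √x ≤ (y - x) / √y := by
  have hmul : x ≤ √x * √y := calc
    x ≤ √x * √x := by
      rw [← sq, Real.sq_sqrt']
      exact le_max_left x 0
    _ ≤ √x * √y := by gcongr
  have hdiv : x / √y ≤ √x := div_le_of_le_mul₀ (Real.sqrt_nonneg y) (Real.sqrt_nonneg x) hmul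
  calc √y - √x ≤ √y - x / √y := sub_le_sub_left hdiv √y
    _ = (y - x) / √y := by rw [sub_div, Real.div_sqrt]

theorem abs_preimage_Icc {α : Type*} [AddCommGroup α] [LinearOrder α] [IsOrderedAddMonoid α]
    {r : α} (hr : 0 ≤ r) (s : α) :
    abs ⁻¹' Set.Icc r s = Set.Icc (-s) (-r) ∪ Set.Icc r s := by
  ext x
  simp only [Set.mem_preimage, Set.mem_union, Set.mem_Icc]
  rcases abs_cases x with ⟨hx, hx₀⟩ | ⟨hx, hx₀⟩ <;> rw [hx] <;> grind

theorem abs_sub_sq_le_iff_abs_mem_Icc {M ε : ℝ} (h : 0 ≤ M + ε) (x : ℝ) :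
    |M - x ^ 2| ≤ ε ↔ |x| ∈ Set.Icc √(M - ε) √(M + ε) := by
  rw [Set.mem_Icc, Real.sqrt_le_left (abs_nonneg x), Real.le_sqrt (abs_nonneg x) h, sq_abs,
    abs_sub_le_iff, sub_le_comm, sub_le_iff_le_add' (a := x ^ 2)]

theorem setOfPred_abs_sub_sq_le_eq {M ε : ℝ} (h : 0 ≤ M + ε) :
    {x : ℝ | |M - x ^ 2| ≤ ε} =
      Set.Icc (-√(M + ε)) (-√(M - ε)) ∪ Set.Icc √(M - ε) √(M + ε) := by
  rw [← abs_preimage_Icc (Real.sqrt_nonneg _)]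
  exact Set.ext (abs_sub_sq_le_iff_abs_mem_Icc h)

theorem singular_theta_set_in_two_intervals
    (a b m ε : ℝ) (hb : 0 ≤ b) (hm : 0 < m) (hε : 0 < ε) :
    ∃ a₁ b₁ a₂ b₂ : ℝ,
      b₁ - a₁ ≤ 2 * ε / Real.sqrt m ∧
      b₂ - a₂ ≤ 2 * ε / Real.sqrt m ∧
      {θ : ℝ | |-((a + θ) ^ 2) + b + m| ≤ ε} ⊆ Set.Icc a₁ b₁ ∪ Set.Icc a₂ b₂ := by
  have hlen : √(b + m + ε) - √(b + m - ε) ≤ 2 * ε / √m := calc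
    √(b + m + ε) - √(b + m - ε) ≤ (b + m + ε - (b + m - ε)) / √(b + m + ε) :=
      sqrt_sub_sqrt_le_sub_div_sqrt (by linarith)
    _ = 2 * ε / √(b + m + ε) := by ring
    _ ≤ 2 * ε / √m := by gcongr; linarith
  have hset : {θ : ℝ | |-((a + θ) ^ 2) + b + m| ≤ ε} =
      (a + ·) ⁻¹' {x | |b + m - x ^ 2| ≤ ε} := by
    ext θ
    rw [Set.mem_preimage, Set.mem_ofPred_eq, Set.mem_ofPred_eq, add_assoc, neg_add_eq_sub]
  rw [hset, setOfPred_abs_sub_sq_le_eq (by positivity), Set.preimage_union,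
    Set.preimage_const_add_Icc, Set.preimage_const_add_Icc]
  exact ⟨_, _, _, _, by linarith, by linarith, subset_rfl⟩
end
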